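/- arXiv:1712.04607 — 5 statements merged into one kernel-verified Lean document; each statement's English description precedes it below -/
import Mathlib

section
/- Let n = 2m be a positive even integer. Then the block diagonal matrix with (1,1) entry equal to 1 and lower right (n-1)×(n-1) block equal to -I_{n-1} (and zeros elsewhere) is not a sum of three idempotent matrices of M_n(Z_5). -/
/-!
With `a = 2 * E₁ - 1` and similarly `b`, `c`, a decomposition of `2 * P - 1` into three idempotents
becomes `a + b + c = -P` with `a ^ 2 = b ^ 2 = c ^ 2 = 1`, because `4 * P - 5 = -P` in
characteristic `5`. Put `D = (a + P) ^ 2 - 1`. Then `b * c + c * b = D - 1`, and `h = ⁅b, c⁆`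
anticommutes with `b` and `c` and satisfies `h ^ 2 = (D - 3) * (D + 1)`.

Let `P = vecMulVec u v` have rank one and let `κ a = v ⬝ᵥ a *ᵥ u`, so that `P * a * P = κ a • P`.
Then `D` is a root of `X ^ 3 - (1 + 2 * κ a) * X ^ 2 - (1 - κ a ^ 2) * X`, which controls when
`h ^ 2` is invertible.

* If `κ a ^ 2 = 1`, then `p = -κ a • D ^ 2` is a rank-one idempotent commuting with `b` and `c`, and
  `h ^ 2 + p = (h + p) ^ 2` is invertible. But conjugation by `b` takes `h + p` to `-h + p`, which
  is `-(h + p) * (1 - 2 * p)` and has determinant `-det (h + p)` in even dimension: a contradiction.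
* If `κ a ≠ 0` and `κ a ^ 2 ≠ 1`, then `h` is invertible, so `b` and `c` have trace zero and `a` has
  trace `-1`. By symmetry this forces `κ b = κ c = 0`, and `κ a + κ b + κ c = -1` gives
  `κ a ^ 2 = 1`.

So `κ a = κ b = κ c = 0`, although their sum is `-1`.
-/

open Matrix Polynomial

section Ring

variable {R : Type*} [Ring R] {a b c P : R}

lemma commute_mul_add_mul_swap (hb : b ^ 2 = 1) : Commute b (b * c + c * b) := by
  rw [commute_iff_eq, mul_add, add_mul, ← mul_assoc, ← sq, hb, mul_assoc c, ← sq, hb, ← mul_assoc]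
  noncomm_ring

lemma semiconjBy_lie_neg (hb : b ^ 2 = 1) : SemiconjBy b ⁅b, c⁆ (-⁅b, c⁆) := by
  have left : b * (b * c) = c := by rw [← mul_assoc, ← sq, hb, one_mul]
  have right : c * b * b = c := by rw [mul_assoc, ← sq, hb, mul_one]
  rw [SemiconjBy, Ring.lie_def, mul_sub, neg_mul, sub_mul, left, right, mul_assoc, neg_sub]

lemma lie_sq (hb : b ^ 2 = 1) (hc : c ^ 2 = 1) :
    ⁅b, c⁆ ^ 2 = (b * c + c * b - 2) * (b * c + c * b + 2) := by
  have hbc : b * (c ^ 2) * b = 1 := by rw [hc, mul_one, ← sq, hb]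
  have hcb : c * (b ^ 2) * c = 1 := by rw [hb, mul_one, ← sq, hc]
  calc ⁅b, c⁆ ^ 2 = (b * c + c * b) ^ 2 - 2 * (b * (c ^ 2) * b) - 2 * (c * (b ^ 2) * c) := by
        rw [Ring.lie_def]; noncomm_ring
    _ = (b * c + c * b - 2) * (b * c + c * b + 2) := by
        rw [hbc, hcb]; grind

lemma two_mul_sub_one_sq {E : R} (hE : IsIdempotentElem E) : (2 * E - 1) ^ 2 = 1 := by
  have : (2 * E - 1) ^ 2 = 4 * (E * E) - 4 * E + 1 := by noncomm_ring
  rw [this, hE.eq, sub_self, zero_add]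

/-- The difference `(a + P) ^ 2 - 1` for a square root `a` of `1` and an idempotent `P`. If
`a + b + c = -P` with `b` and `c` also square roots of `1`, it commutes with both of them. -/
def squareDefect (a P : R) : R := P + a * P + P * a

lemma add_sq_eq_squareDefect_add_one (ha : a ^ 2 = 1) (hP : IsIdempotentElem P) :
    (a + P) ^ 2 = squareDefect a P + 1 := by
  rw [squareDefect, sq, add_mul, mul_add, mul_add, ← sq, ha, hP.eq]
  abel

/-- Three square roots of `1` in a ring whose sum is `-P`. In characteristic `5`, idempotents
with sum `2 * P - 1` give such a triple through `E ↦ 2 * E - 1`. -/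
structure IsInvolutionTriple (P a b c : R) : Prop where
  sq_fst : a ^ 2 = 1
  sq_snd : b ^ 2 = 1
  sq_trd : c ^ 2 = 1
  sum_eq : a + b + c = -P

namespace IsInvolutionTriple

lemma rotate (T : IsInvolutionTriple P a b c) : IsInvolutionTriple P b c a :=
  ⟨T.sq_snd, T.sq_trd, T.sq_fst, by rw [← T.sum_eq]; abel⟩

lemma swap (T : IsInvolutionTriple P a b c) : IsInvolutionTriple P a c b :=
  ⟨T.sq_fst, T.sq_trd, T.sq_snd, by rw [← T.sum_eq]; abel⟩

lemma mul_add_mul_swap (T : IsInvolutionTriple P a b c) (hP : IsIdempotentElem P) :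
    b * c + c * b = squareDefect a P - 1 := by
  have hsum : b + c = -(a + P) := by
    rw [neg_add', ← sub_eq_of_eq_add' T.sum_eq.symm]; abel
  have hsq : (b + c) ^ 2 = b ^ 2 + c ^ 2 + (b * c + c * b) := by noncomm_ring
  rw [T.sq_snd, T.sq_trd, hsum, neg_sq, add_sq_eq_squareDefect_add_one T.sq_fst hP] at hsq
  rw [← sub_eq_of_eq_add' hsq]
  noncomm_ring

lemma commute_squareDefect (T : IsInvolutionTriple P a b c) (hP : IsIdempotentElem P) :
    Commute b (squareDefect a P) := by
  rw [← sub_add_cancel (squareDefect a P) 1, ← T.mul_add_mul_swap hP]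
  exact (commute_mul_add_mul_swap T.sq_snd).add_right (Commute.one_right b)

lemma lie_sq_eq_squareDefect (T : IsInvolutionTriple P a b c) (hP : IsIdempotentElem P) :
    ⁅b, c⁆ ^ 2 = (squareDefect a P - 3) * (squareDefect a P + 1) := by
  rw [lie_sq T.sq_snd T.sq_trd, T.mul_add_mul_swap hP]
  congr 1 <;> grind

lemma of_isIdempotentElem {E₁ E₂ E₃ : R} (five : (5 : R) = 0) (h₁ : IsIdempotentElem E₁)
    (h₂ : IsIdempotentElem E₂) (h₃ : IsIdempotentElem E₃) (hsum : 2 * P - 1 = E₁ + E₂ + E₃) :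
    IsInvolutionTriple P (2 * E₁ - 1) (2 * E₂ - 1) (2 * E₃ - 1) where
  sq_fst := two_mul_sub_one_sq h₁
  sq_snd := two_mul_sub_one_sq h₂
  sq_trd := two_mul_sub_one_sq h₃
  sum_eq := by
    calc 2 * E₁ - 1 + (2 * E₂ - 1) + (2 * E₃ - 1) = 2 * (E₁ + E₂ + E₃) - 3 := by grind
      _ = -P + 5 * (P - 1) := by rw [← hsum]; grind
      _ = -P := by rw [five, zero_mul, add_zero]

end IsInvolutionTriple

end Ring

section Algebra

variable {K R : Type*} [CommRing K] [Ring R] [Algebra K R]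

section SquareDefect

variable {a P : R} {κ : K}

lemma squareDefect_mul_right (hP : IsIdempotentElem P) (hκ : P * a * P = κ • P) :
    squareDefect a P * P = (a + (1 + κ) • 1) * P := by
  rw [squareDefect, add_mul, add_mul, mul_assoc a, hP.eq, hκ, add_mul, smul_one_mul]
  module

lemma squareDefect_mul_shift_mul (ha : a ^ 2 = 1) (hP : IsIdempotentElem P)
    (hκ : P * a * P = κ • P) :
    squareDefect a P * ((a + (1 + κ) • 1) * P) =
      (1 + 2 * κ) • ((a + (1 + κ) • 1) * P) + (1 - κ ^ 2) • P := by
  have hPaaP : P * a * (a * P) = P := by rw [mul_assoc, ← mul_assoc a, ← sq, ha, one_mul, hP.eq]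
  have hDaP : squareDefect a P * (a * P) = κ • P + κ • (a * P) + P := by
    rw [squareDefect, add_mul, add_mul, hPaaP, mul_assoc a, ← mul_assoc P, hκ, mul_smul_comm]
  rw [add_mul a, smul_one_mul, mul_add, hDaP, mul_smul_comm, squareDefect_mul_right hP hκ, add_mul,
    smul_one_mul]
  module

lemma squareDefect_eq_shift_mul_add_mul_shift (a P : R) (κ : K) :
    squareDefect a P = P * (a + (1 + κ) • 1) + (a + (1 + κ) • 1) * P - (1 + 2 * κ) • P := by
  rw [squareDefect, mul_add, add_mul, mul_smul_one, smul_one_mul]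
  module

lemma squareDefect_sq (ha : a ^ 2 = 1) (hP : IsIdempotentElem P) (hκ : P * a * P = κ • P) :
    squareDefect a P ^ 2 = (a + (1 + κ) • 1) * P * (a + (1 + κ) • 1) + (1 - κ ^ 2) • P := by
  rw [sq]
  nth_rw 2 [squareDefect_eq_shift_mul_add_mul_shift a P κ]
  rw [mul_sub, mul_add, ← mul_assoc, squareDefect_mul_right hP hκ, mul_smul_comm,
    squareDefect_mul_right hP hκ, squareDefect_mul_shift_mul ha hP hκ]
  module

lemma squareDefect_cube (ha : a ^ 2 = 1) (hP : IsIdempotentElem P) (hκ : P * a * P = κ • P) :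
    squareDefect a P ^ 3 =
      (1 + 2 * κ) • squareDefect a P ^ 2 + (1 - κ ^ 2) • squareDefect a P := by
  rw [pow_succ', squareDefect_sq ha hP hκ, mul_add, mul_smul_comm, squareDefect_mul_right hP hκ,
    ← mul_assoc, squareDefect_mul_shift_mul ha hP hκ, add_mul, smul_mul_assoc, smul_mul_assoc]
  rw [squareDefect_eq_shift_mul_add_mul_shift a P κ]
  module

end SquareDefect

lemma isUnit_aeval_of_isCoprime {x : R} {p q : K[X]} (hp : aeval x p = 0) (hpq : IsCoprime p q) :
    IsUnit (aeval x q) := by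
  obtain ⟨r, s, hrs⟩ := hpq
  have hsq : aeval x (s * q) = 1 := by
    simpa only [map_add, map_mul, hp, mul_zero, zero_add, map_one] using congrArg (aeval x) hrs
  exact ⟨⟨aeval x q, aeval x s, by rw [← map_mul, mul_comm, hsq], by rw [← map_mul, hsq]⟩, rfl⟩

end Algebra

section FieldAlgebra

variable {F R : Type*} [Field F] [Ring R] [Algebra F R] {D : R} {κ : F}

lemma isCoprime_X_sub_C_of_eval_ne_zero {p : F[X]} {r : F} (hr : p.eval r ≠ 0) :
    IsCoprime p (X - C r) :=
  ((irreducible_X_sub_C r).coprime_iff_not_dvd.2 (mt dvd_iff_isRoot.1 hr)).symm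

variable [CharP F 5]

lemma isUnit_sub_three_mul_add_one (hD : D ^ 3 = (1 + 2 * κ) • D ^ 2 + (1 - κ ^ 2) • D)
    (h0 : κ ≠ 0) (h1 : κ ^ 2 ≠ 1) : IsUnit ((D - 3) * (D + 1)) := by
  have five : (5 : F) = 0 := CharP.ofNat_eq_zero F 5
  let p : F[X] := X ^ 3 - (1 + 2 * κ) • X ^ 2 - (1 - κ ^ 2) • X
  have hp : aeval D p = 0 := by
    simp only [p, map_sub, map_smul, map_pow, aeval_X, hD, add_sub_cancel_left, sub_self]
  have hthree : p.eval 3 ≠ 0 := by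
    have : p.eval 3 = 3 * (κ * (κ - 1)) := by
      simp only [p, eval_sub, eval_smul, eval_pow, eval_X, smul_eq_mul]
      linear_combination (3 - 3 * κ) * five
    grind
  have hneg_one : p.eval (-1) ≠ 0 := by
    have : p.eval (-1) = - (κ + 1) ^ 2 := by
      simp only [p, eval_sub, eval_smul, eval_pow, eval_X, smul_eq_mul]
      ring
    grind
  have hunit := isUnit_aeval_of_isCoprime hp ((isCoprime_X_sub_C_of_eval_ne_zero hthree).mul_right
    (isCoprime_X_sub_C_of_eval_ne_zero hneg_one))
  rw [map_mul, map_sub, map_sub, aeval_X, aeval_C, aeval_C, map_neg, map_one, map_ofNat,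
    sub_neg_eq_add] at hunit
  exact hunit

lemma isUnit_sub_three_mul_add_one_sub_smul_sq (hD : D ^ 3 = (1 + 2 * κ) • D ^ 2)
    (hκ : κ ^ 2 = 1) : IsUnit ((D - 3) * (D + 1) - κ • D ^ 2) := by
  let p : F[X] := X ^ 3 - (1 + 2 * κ) • X ^ 2
  let q : F[X] := (X - C 3) * (X + 1) - κ • X ^ 2
  have hp : aeval D p = 0 := by
    simp only [p, map_sub, map_smul, map_pow, aeval_X, hD, sub_self]
  have hpq : IsCoprime p q := by
    have five : (5 : F[X]) = 0 := CharP.ofNat_eq_zero F[X] 5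
    have hCκ : C κ ^ 2 = 1 := by rw [← map_pow, hκ, map_one]
    -- Coefficients from the Euclidean algorithm, reduced modulo `5` and `κ ^ 2 - 1`.
    refine ⟨-((1 - C κ) * X + 3 * C κ), X ^ 2 - 2 * X + 3, ?_⟩
    simp only [p, q, smul_eq_C_mul, map_add, map_mul, map_one, map_ofNat]
    linear_combination (-X ^ 3 + 2 * X ^ 2 - 2) * five + (-2 * X ^ 3 + 6 * X ^ 2) * hCκ
  have hunit := isUnit_aeval_of_isCoprime hp hpq
  simp only [q, map_sub, map_mul, map_smul, map_pow, aeval_X, map_add, map_one, aeval_C] at hunit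
  rwa [map_ofNat] at hunit

end FieldAlgebra

section Matrix

variable {n K : Type*} [Fintype n] [CommRing K]

section RankOne

variable {u v : n → K}

lemma isIdempotentElem_vecMulVec (huv : v ⬝ᵥ u = 1) :
    IsIdempotentElem (vecMulVec u v) := by
  rw [IsIdempotentElem, vecMulVec_mul_vecMulVec, huv, one_smul]

lemma vecMulVec_mul_mul_vecMulVec (u v : n → K) (a : Matrix n n K) :
    vecMulVec u v * a * vecMulVec u v = (v ⬝ᵥ a *ᵥ u) • vecMulVec u v := by
  rw [mul_assoc, mul_vecMulVec, vecMulVec_mul_vecMulVec, vecMulVec_smul]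

lemma mul_vecMulVec_of_commute (huv : v ⬝ᵥ u = 1) {x : Matrix n n K}
    (hx : Commute x (vecMulVec u v)) : x * vecMulVec u v = (v ⬝ᵥ x *ᵥ u) • vecMulVec u v := by
  rw [← vecMulVec_mul_mul_vecMulVec, ← hx.eq, mul_assoc, (isIdempotentElem_vecMulVec huv).eq]

end RankOne

variable [DecidableEq n] {b h : Matrix n n K} {u v : n → K}

lemma trace_eq_zero_of_semiconjBy_neg [NoZeroDivisors K] [NeZero (2 : K)]
    (hbh : SemiconjBy b h (-h)) (hh : IsUnit h) : b.trace = 0 := by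
  obtain ⟨h, rfl⟩ := hh
  have hconj : h * b * h⁻¹ = -b := by
    rw [← neg_eq_iff_eq_neg.2 (hbh.eq.trans (neg_mul _ _)), neg_mul, mul_assoc, h.mul_inv, mul_one]
  have htrace : -b.trace = b.trace := by rw [← trace_neg, ← hconj, trace_units_conj]
  have htwo : 2 * b.trace = 0 := by linear_combination -htrace
  exact (mul_eq_zero.1 htwo).resolve_left two_ne_zero

lemma mul_vecMulVec_eq_zero_of_semiconjBy_neg [NoZeroDivisors K] [NeZero (2 : K)]
    (huv : v ⬝ᵥ u = 1) (hb : b ^ 2 = 1) (hbh : SemiconjBy b h (-h))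
    (hbp : Commute b (vecMulVec u v)) (hhp : Commute h (vecMulVec u v)) :
    h * vecMulVec u v = 0 := by
  have hb_smul := mul_vecMulVec_of_commute huv hbp
  have hh_smul := mul_vecMulVec_of_commute huv hhp
  have hcomm : b * (h * vecMulVec u v) = h * (b * vecMulVec u v) := by
    rw [hb_smul, hh_smul, mul_smul_comm, mul_smul_comm, hb_smul, hh_smul, smul_comm]
  have hanti : b * (h * vecMulVec u v) = -(h * (b * vecMulVec u v)) := by
    rw [← mul_assoc, hbh.eq, neg_mul, neg_mul, mul_assoc]
  have htwo : (2 : K) • (b * (h * vecMulVec u v)) = 0 := by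
    rw [two_smul]
    nth_rw 1 [hanti]
    rw [hcomm, neg_add_cancel]
  calc h * vecMulVec u v = b * (b * (h * vecMulVec u v)) := by
        rw [← mul_assoc b, ← sq, hb, one_mul]
    _ = 0 := by rw [(smul_eq_zero.1 htwo).resolve_left two_ne_zero, mul_zero]

lemma det_one_sub_two_mul_vecMulVec (huv : v ⬝ᵥ u = 1) :
    (1 - 2 * vecMulVec u v).det = -1 := by
  have : 1 - 2 * vecMulVec u v =
      1 + replicateCol Unit ((-2 : K) • u) * replicateRow Unit v := by
    rw [← vecMulVec_eq, smul_vecMulVec, neg_smul, ← sub_eq_add_neg, two_smul, two_mul]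
  rw [this, det_one_add_replicateCol_mul_replicateRow, dotProduct_smul, huv, smul_eq_mul]
  ring

lemma not_isUnit_sq_add_vecMulVec [IsDomain K] [NeZero (2 : K)] (hn : Even (Fintype.card n))
    (huv : v ⬝ᵥ u = 1) (hb : b ^ 2 = 1) (hbh : SemiconjBy b h (-h))
    (hbp : Commute b (vecMulVec u v)) (hhp : Commute h (vecMulVec u v)) :
    ¬ IsUnit (h ^ 2 + vecMulVec u v) := by
  have hp := isIdempotentElem_vecMulVec huv
  have hhp_zero := mul_vecMulVec_eq_zero_of_semiconjBy_neg huv hb hbh hbp hhp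
  set p := vecMulVec u v
  have hsq : (h + p) ^ 2 = h ^ 2 + p := by
    rw [sq, add_mul, mul_add, mul_add, hp.eq, ← hhp.eq, hhp_zero, add_zero, zero_add, sq]
  have hreflect : b * (h + p) = -((h + p) * (1 - 2 * p)) * b := by
    have : (h + p) * (1 - 2 * p) = h - p := by
      have : (h + p) * (1 - 2 * p) = h + p - 2 * (h * p) - 2 * (p * p) := by noncomm_ring
      rw [this, hhp_zero, hp.eq]; noncomm_ring
    rw [this, (hbh.add_right hbp).eq, neg_sub, neg_add_eq_sub]
  have hdet := congrArg det hreflect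
  rw [det_mul, det_mul, det_neg, hn.neg_one_pow, one_mul, det_mul,
    det_one_sub_two_mul_vecMulVec huv] at hdet
  have hbdet : b.det ^ 2 = 1 := by rw [← det_pow, hb, det_one]
  have hdet_zero : 2 * (h + p).det = 0 := by
    linear_combination b.det * hdet - 2 * (h + p).det * hbdet
  rw [← hsq, isUnit_pow_iff two_ne_zero, isUnit_iff_isUnit_det,
    (mul_eq_zero.1 hdet_zero).resolve_left two_ne_zero]
  exact not_isUnit_zero

lemma vecMul_add_smul_one_dotProduct_mulVec {a : Matrix n n K} (ha : a ^ 2 = 1) (r : K) :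
    (v ᵥ* (a + r • 1)) ⬝ᵥ ((a + r • 1) *ᵥ u) =
      (1 + r ^ 2) * (v ⬝ᵥ u) + 2 * r * (v ⬝ᵥ a *ᵥ u) := by
  have hsq : (a + r • 1) * (a + r • 1) = (1 + r ^ 2) • 1 + (2 * r) • a := by
    rw [add_mul, mul_add, ← sq, ha, smul_one_mul, mul_smul_one]
    module
  rw [← dotProduct_mulVec, mulVec_mulVec, hsq, add_mulVec, smul_mulVec, smul_mulVec, one_mulVec,
    dotProduct_add, dotProduct_smul, dotProduct_smul, smul_eq_mul, smul_eq_mul]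

lemma IsInvolutionTriple.sum_dotProduct_mulVec {a c : Matrix n n K}
    (T : IsInvolutionTriple (vecMulVec u v) a b c) (huv : v ⬝ᵥ u = 1) :
    v ⬝ᵥ a *ᵥ u + v ⬝ᵥ b *ᵥ u + v ⬝ᵥ c *ᵥ u = -1 := by
  rw [← dotProduct_add, ← dotProduct_add, ← add_mulVec, ← add_mulVec, T.sum_eq, neg_mulVec,
    vecMulVec_mulVec, huv, MulOpposite.op_one, one_smul, dotProduct_neg, huv]

end Matrix

lemma neZero_two_of_charP_five (F : Type*) [Field F] [CharP F 5] : NeZero (2 : F) :=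
  mod_cast NeZero.of_not_dvd F (p := 5) (n := 2) (by decide)

section CharFive

variable {n F : Type*} [Fintype n] [DecidableEq n] [Field F] [CharP F 5] {u v : n → F}

namespace IsInvolutionTriple

variable {a b c : Matrix n n F}

lemma trace_snd_eq_zero (T : IsInvolutionTriple (vecMulVec u v) a b c) (huv : v ⬝ᵥ u = 1)
    (h0 : v ⬝ᵥ a *ᵥ u ≠ 0) (h1 : (v ⬝ᵥ a *ᵥ u) ^ 2 ≠ 1) : b.trace = 0 := by
  have hP := isIdempotentElem_vecMulVec huv
  have hcube := squareDefect_cube T.sq_fst hP (vecMulVec_mul_mul_vecMulVec u v a)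
  have hunit := isUnit_sub_three_mul_add_one hcube h0 h1
  rw [← T.lie_sq_eq_squareDefect hP, isUnit_pow_iff two_ne_zero] at hunit
  have := neZero_two_of_charP_five F
  exact trace_eq_zero_of_semiconjBy_neg (semiconjBy_lie_neg T.sq_snd) hunit

lemma sq_dotProduct_mulVec_ne_one (hn : Even (Fintype.card n))
    (T : IsInvolutionTriple (vecMulVec u v) a b c) (huv : v ⬝ᵥ u = 1) :
    (v ⬝ᵥ a *ᵥ u) ^ 2 ≠ 1 := by
  intro hκ
  have hP := isIdempotentElem_vecMulVec huv
  have hPaP := vecMulVec_mul_mul_vecMulVec u v a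
  set κ := v ⬝ᵥ a *ᵥ u
  set D := squareDefect a (vecMulVec u v)
  let U := a + (1 + κ) • (1 : Matrix n n F)
  -- `-κ • D ^ 2` is the spectral idempotent of `D` at `1 + 2 * κ`, as `(1 + 2 * κ) ^ 2 = -κ`.
  have hD_sq : -κ • D ^ 2 = vecMulVec (-κ • U *ᵥ u) (v ᵥ* U) := by
    rw [squareDefect_sq T.sq_fst hP hPaP, hκ, sub_self, zero_smul, add_zero, mul_vecMulVec,
      vecMulVec_mul, smul_vecMulVec]
  have hD_cube : D ^ 3 = (1 + 2 * κ) • D ^ 2 := by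
    rw [squareDefect_cube T.sq_fst hP hPaP, hκ, sub_self, zero_smul, add_zero]
  have hnormal : (v ᵥ* U) ⬝ᵥ (-κ • U *ᵥ u) = 1 := by
    rw [dotProduct_smul, vecMul_add_smul_one_dotProduct_mulVec T.sq_fst, huv, smul_eq_mul]
    linear_combination (-3 * κ - 4) * hκ - (1 + κ) * (CharP.ofNat_eq_zero F 5 : (5 : F) = 0)
  have hbD : Commute b (-κ • D ^ 2) := ((T.commute_squareDefect hP).pow_right 2).smul_right _
  have hcD : Commute c (-κ • D ^ 2) := ((T.swap.commute_squareDefect hP).pow_right 2).smul_right _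
  have hlie : Commute ⁅b, c⁆ (-κ • D ^ 2) := (hbD.mul_left hcD).sub_left (hcD.mul_left hbD)
  have hunit := isUnit_sub_three_mul_add_one_sub_smul_sq hD_cube hκ
  rw [← T.lie_sq_eq_squareDefect hP, sub_eq_add_neg, ← neg_smul, hD_sq] at hunit
  rw [hD_sq] at hbD hlie
  have := neZero_two_of_charP_five F
  exact not_isUnit_sq_add_vecMulVec hn hnormal T.sq_snd (semiconjBy_lie_neg T.sq_snd) hbD hlie hunit

lemma dotProduct_mulVec_eq_zero (hn : Even (Fintype.card n))
    (T : IsInvolutionTriple (vecMulVec u v) a b c) (huv : v ⬝ᵥ u = 1) : v ⬝ᵥ a *ᵥ u = 0 := by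
  by_contra ha
  have ha_sq := T.sq_dotProduct_mulVec_ne_one hn huv
  have hb_trace : b.trace = 0 := T.trace_snd_eq_zero huv ha ha_sq
  have hc_trace : c.trace = 0 := T.swap.trace_snd_eq_zero huv ha ha_sq
  have ha_trace : a.trace ≠ 0 := by
    have htrace := congrArg trace T.sum_eq
    rw [trace_add, trace_add, hb_trace, hc_trace, add_zero, add_zero, trace_neg, trace_vecMulVec,
      dotProduct_comm, huv] at htrace
    rw [htrace]
    exact neg_ne_zero.2 one_ne_zero
  have hb : v ⬝ᵥ b *ᵥ u = 0 := by
    by_contra hb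
    exact ha_trace (T.rotate.swap.trace_snd_eq_zero huv hb
      (T.rotate.sq_dotProduct_mulVec_ne_one hn huv))
  have hc : v ⬝ᵥ c *ᵥ u = 0 := by
    by_contra hc
    exact ha_trace (T.rotate.rotate.trace_snd_eq_zero huv hc
      (T.rotate.rotate.sq_dotProduct_mulVec_ne_one hn huv))
  have hsum := T.sum_dotProduct_mulVec huv
  rw [hb, hc, add_zero, add_zero] at hsum
  exact ha_sq (by rw [hsum, neg_one_sq])

end IsInvolutionTriple

theorem diag_one_neg_ones_not_sum_three_idempotents_zmod5_general (hn : Even (Fintype.card n))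
    (huv : v ⬝ᵥ u = 1) :
    ¬ ∃ E₁ E₂ E₃ : Matrix n n F,
      IsIdempotentElem E₁ ∧ IsIdempotentElem E₂ ∧ IsIdempotentElem E₃ ∧
        2 * vecMulVec u v - 1 = E₁ + E₂ + E₃ := by
  rintro ⟨E₁, E₂, E₃, h₁, h₂, h₃, hsum⟩
  have five : (5 : Matrix n n F) = 0 := by
    rw [← map_ofNat (algebraMap F (Matrix n n F)) 5, CharP.ofNat_eq_zero F 5, map_zero]
  have T := IsInvolutionTriple.of_isIdempotentElem five h₁ h₂ h₃ hsum
  have hκ := T.sum_dotProduct_mulVec huv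
  rw [T.dotProduct_mulVec_eq_zero hn huv, T.rotate.dotProduct_mulVec_eq_zero hn huv,
    T.rotate.rotate.dotProduct_mulVec_eq_zero hn huv, add_zero, add_zero, zero_eq_neg] at hκ
  exact one_ne_zero hκ

end CharFive

lemma diagonal_ite_eq_two_mul_vecMulVec_single_sub_one {n R : Type*} [Fintype n] [DecidableEq n]
    [Ring R] (i : n) :
    diagonal (fun j => if j = i then (1 : R) else -1) =
      2 * vecMulVec (Pi.single i 1) (Pi.single i 1) - 1 := by
  have hP : vecMulVec (Pi.single i 1) (Pi.single i 1) = diagonal (Pi.single i (1 : R)) := by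
    rw [← single_eq_single_vecMulVec_single, diagonal_single]
  rw [hP, two_mul, diagonal_add, ← diagonal_one, diagonal_sub]
  congr 1 with j
  by_cases hj : j = i <;> simp [hj]

/-- For a positive even integer `n`, the diagonal matrix `diag(1, -1, …, -1)` is not a
sum of three idempotent matrices of `M_n(ℤ/5)`. -/
theorem diag_one_neg_ones_not_sum_three_idempotents_zmod5 (n : ℕ) (hn : 0 < n)
    (hne : Even n) :
    ¬ ∃ E₁ E₂ E₃ : Matrix (Fin n) (Fin n) (ZMod 5),
      E₁ * E₁ = E₁ ∧ E₂ * E₂ = E₂ ∧ E₃ * E₃ = E₃ ∧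
        Matrix.diagonal (fun i : Fin n => if (i : ℕ) = 0 then (1 : ZMod 5) else -1)
          = E₁ + E₂ + E₃ := by
  rintro ⟨E₁, E₂, E₃, h₁, h₂, h₃, hsum⟩
  have : Fact (Nat.Prime 5) := ⟨Nat.prime_five⟩
  let e : Fin n → ZMod 5 := Pi.single ⟨0, hn⟩ 1
  have he : e ⬝ᵥ e = 1 := by simp [e]
  have hdiag : diagonal (fun i : Fin n => if (i : ℕ) = 0 then (1 : ZMod 5) else -1) =
      2 * vecMulVec e e - 1 := by
    simpa only [Fin.ext_iff] using
      diagonal_ite_eq_two_mul_vecMulVec_single_sub_one (⟨0, hn⟩ : Fin n)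
  exact diag_one_neg_ones_not_sum_three_idempotents_zmod5_general (by rwa [Fintype.card_fin]) he
    ⟨E₁, E₂, E₃, h₁, h₂, h₃, hdiag ▸ hsum⟩
end

section
/- Let n be a positive even integer. Then the block diagonal matrix with (1,1) entry equal to 2 and lower right (n-1)×(n-1) block equal to -I_{n-1} (and zeros elsewhere) is not a sum of three idempotent matrices of M_n(Z_5). -/
/-!
The matrix is `-1 + 3P` with `P x = f(x) e` and `f(e) = 1`. In characteristic 5, if
`A + B + E = -1 + 3P` with `A`, `B`, `E` idempotent and `J = 2E - 1`, then `A + B - 1 = 2Y` where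
`Y = J - P` is a rank-one perturbation of an involution. The difference `D = A - B` anticommutes
with `Y`, and `D² = 1 + Y²`. On `ker (1 - Y²)` both `Y` and `D` are invertible, so comparing the
determinants of `DY` and `-YD` shows that this kernel has even dimension. It remains to see that
`1 - Y²` has rank one: it maps `x` to `f(x) Ye + f(Jx) e`. If its rank were two, its range would be
the span of the independent vectors `e` and `Je`. On this plane `Y² + Y = 1 - f(Je)` by
Cayley–Hamilton, and combining this with the anticommutation yields a nontrivial linear relation
between `e` and `Je`. Rank zero would mean `JP + PJ = P`, which is possible only in
characteristic 3.
-/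

section Ring

variable {R : Type*} [Ring R]

theorem sub_mul_add_sub_one_of_isIdempotentElem {a b : R} (ha : IsIdempotentElem a)
    (hb : IsIdempotentElem b) : (a - b) * (a + b - 1) = -((a + b - 1) * (a - b)) := by
  simp only [mul_add, add_mul, mul_sub, sub_mul, mul_one, one_mul, ha.eq, hb.eq]
  abel

theorem sub_mul_self_of_isIdempotentElem {a b : R} (ha : IsIdempotentElem a)
    (hb : IsIdempotentElem b) : (a - b) * (a - b) = 1 - (a + b - 1) * (a + b - 1) := by
  simp only [mul_add, add_mul, mul_sub, sub_mul, mul_one, one_mul, ha.eq, hb.eq]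
  abel

theorem commute_mul_self_of_mul_eq_neg_mul {a b : R} (h : a * b = -(b * a)) :
    Commute a (b * b) := by
  have hsemi : SemiconjBy a b (-b) := by rw [SemiconjBy, h, neg_mul]
  have hsq : SemiconjBy a (b * b) (-b * -b) := hsemi.mul_right hsemi
  rwa [neg_mul_neg] at hsq

theorem two_mul_sub_one_mul_self_of_isIdempotentElem {a : R} (ha : IsIdempotentElem a) :
    (2 * a - 1) * (2 * a - 1) = 1 :=
  calc (2 * a - 1) * (2 * a - 1) = 4 * (a * a) - 4 * a + 1 := by noncomm_ring
    _ = 1 := by rw [ha.eq, sub_self, zero_add]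

theorem exists_anticommute_of_add_add_eq (h5 : (5 : R) = 0) {a b c p : R}
    (ha : IsIdempotentElem a) (hb : IsIdempotentElem b) (hc : IsIdempotentElem c)
    (h : a + b + c = -1 + 3 • p) :
    ∃ j d : R, j * j = 1 ∧ d * (j - p) = -((j - p) * d) ∧
      d * d = 1 + (j - p) * (j - p) := by
  -- `3` is the inverse of `2` in characteristic 5
  have hy : 2 * c - 1 - p = 3 • (a + b - 1) :=
    calc 2 * c - 1 - p = 3 • (-1 + 3 • p - c - 1) + 5 * (1 + c - 2 * p) := by noncomm_ring
      _ = 3 • (a + b - 1) := by rw [← h, h5]; noncomm_ring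
  refine ⟨2 * c - 1, a - b, two_mul_sub_one_mul_self_of_isIdempotentElem hc, ?_, ?_⟩
  · rw [hy, mul_smul_comm, smul_mul_assoc, sub_mul_add_sub_one_of_isIdempotentElem ha hb, smul_neg]
  · rw [hy, sub_mul_self_of_isIdempotentElem ha hb]
    generalize a + b - 1 = x
    calc 1 - x * x = 1 + (3 • x) * (3 • x) - 5 * (2 * (x * x)) := by noncomm_ring
      _ = 1 + (3 • x) * (3 • x) := by rw [h5, zero_mul, sub_zero]

end Ring

theorem linear_mul_eq_zero_of_quadratic_mul_eq_zero {K R : Type*} [Field K] [Ring R] [Algebra K R]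
    (h2 : (2 : K) ≠ 0) {y d n : R} {k : K} (hdy : d * y = -(y * d)) (hdd : d * d = 1 + y * y)
    (hdn : Commute d n) (hn : (y * y + y + k • 1) * n = 0) :
    ((2 - k) • y + k • 1) * n = 0 := by
  have hplus : (y * y + y + k • 1) * (d * n) = 0 := by
    rw [hdn.eq, ← mul_assoc, hn, zero_mul]
  have hminus : (y * y - y + k • 1) * (d * n) = 0 := by
    have hdyy : d * (y * y) = y * y * d := commute_mul_self_of_mul_eq_neg_mul hdy
    calc (y * y - y + k • 1) * (d * n) = d * ((y * y + y + k • 1) * n) := by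
          simp only [← mul_assoc, mul_add, add_mul, hdyy, hdy, mul_smul_comm,
            smul_mul_assoc, one_mul, neg_mul, sub_eq_add_neg]
      _ = 0 := by rw [hn, mul_zero]
  have hydn : y * (d * n) = 0 := by
    have : (2 : K) • (y * (d * n)) = 0 := by
      calc (2 : K) • (y * (d * n))
          = (y * y + y + k • 1) * (d * n) - (y * y - y + k • 1) * (d * n) := by
            rw [← sub_mul, ← smul_mul_assoc]
            congr 1
            module
        _ = 0 := by rw [hplus, hminus, sub_zero]
    exact (smul_eq_zero_iff_right h2).mp this
  have hcubic : y * (1 + y * y) * n = 0 := by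
    rw [← hdd, ← mul_assoc, ← neg_neg (y * d), ← hdy, neg_mul, neg_mul, mul_assoc, mul_assoc, hydn,
      mul_zero, neg_zero]
  calc ((2 - k) • y + k • 1) * n
      = (y * (1 + y * y) - (y - 1) * (y * y + y + k • 1)) * n := by
        congr 1
        simp only [mul_add, sub_mul, mul_smul_comm, mul_one, one_mul]
        module
    _ = 0 := by rw [sub_mul, hcubic, mul_assoc, hn, mul_zero, sub_zero]

section LinearMap

open Module LinearMap

theorem even_finrank_of_mul_eq_neg_mul {R M : Type*} [CommRing R] [AddCommGroup M] [Module R M]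
    [Module.Free R M] (hR : (-1 : R) ≠ 1) {f g : End R M} (hf : IsUnit f) (hg : IsUnit g)
    (hfg : f * g = -(g * f)) : Even (finrank R M) := by
  have hdet : LinearMap.det (f * g) = (-1) ^ finrank R M * LinearMap.det (f * g) :=
    calc LinearMap.det (f * g) = LinearMap.det ((-1 : R) • (g * f)) := by rw [hfg, neg_one_smul]
      _ = (-1) ^ finrank R M * LinearMap.det (f * g) := by
        rw [LinearMap.det_smul, map_mul, map_mul, mul_comm (LinearMap.det g)]
  rw [← neg_one_pow_eq_one_iff_even hR]
  exact ((hf.mul hg).map LinearMap.det).mul_eq_right.mp hdet.symm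

variable {K V : Type*} [Field K] [AddCommGroup V] [Module K V]

theorem even_finrank_ker_one_sub_mul_self (h2 : (2 : K) ≠ 0) {Y D : End K V}
    (hDY : D * Y = -(Y * D)) (hDD : D * D = 1 + Y * Y) :
    Even (finrank K (ker (1 - Y * Y))) := by
  have hY (x) (hx : x ∈ ker (1 - Y * Y)) : Y (Y x) = x := by
    simpa [sub_eq_zero, @eq_comm V x] using hx
  have hD (x) (hx : x ∈ ker (1 - Y * Y)) : D (D x) = (2 : K) • x :=
    calc D (D x) = x + Y (Y x) := LinearMap.congr_fun hDD x
      _ = (2 : K) • x := by rw [hY x hx, two_smul]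
  have hYmaps : ∀ x ∈ ker (1 - Y * Y), Y x ∈ ker (1 - Y * Y) := fun x hx ↦ by
    simp [hY x hx]
  have hDmaps : ∀ x ∈ ker (1 - Y * Y), D x ∈ ker (1 - Y * Y) := fun x hx ↦ by
    have hYYD : Y (Y (D x)) = D (Y (Y x)) :=
      (LinearMap.congr_fun (commute_mul_self_of_mul_eq_neg_mul hDY) x).symm
    simp [hYYD, hY x hx]
  have hYunit : IsUnit (Y.restrict hYmaps) :=
    isUnit_mul_self_iff.mp <| by
      convert isUnit_one
      ext x
      exact hY x x.2
  have hDunit : IsUnit (D.restrict hDmaps) :=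
    isUnit_mul_self_iff.mp <| by
      convert (Ne.isUnit h2).map (algebraMap K (End K (ker (1 - Y * Y))))
      ext x
      exact hD x x.2
  have hneg : (-1 : K) ≠ 1 := fun h ↦ h2 (by linear_combination -h)
  exact even_finrank_of_mul_eq_neg_mul hneg hDunit hYunit <| by
    ext x
    exact LinearMap.congr_fun hDY x

namespace RankOnePerturbation

variable {J Y : End K V} {e : V} {f : Dual K V}

theorem one_sub_mul_self_apply (hJ : J * J = 1) (hY : ∀ x, Y x = J x - f x • e) (x : V) :
    (1 - Y * Y) x = f x • Y e + f (J x) • e := by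
  have hJJ : J (J x) = x := LinearMap.congr_fun hJ x
  simp only [LinearMap.sub_apply, End.one_apply, End.mul_apply, hY, map_sub, map_smul, hJJ]
  module

theorem quadratic_mul_one_sub_mul_self_eq_zero (hJ : J * J = 1) (hfe : f e = 1)
    (hY : ∀ x, Y x = J x - f x • e) :
    (Y * Y + Y + (f (J e) - 1) • 1) * (1 - Y * Y) = 0 := by
  have hqe : Y (Y e) + Y e + (f (J e) - 1) • e = 0 := by
    have hNe : e - Y (Y e) = f e • Y e + f (J e) • e := one_sub_mul_self_apply hJ hY e
    rw [← sub_eq_zero, hfe] at hNe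
    rw [← neg_eq_zero, ← hNe]
    module
  ext x
  rw [End.mul_apply, one_sub_mul_self_apply hJ hY]
  calc (Y * Y + Y + (f (J e) - 1) • 1 : End K V) (f x • Y e + f (J x) • e)
      = f x • Y (Y (Y e) + Y e + (f (J e) - 1) • e)
        + f (J x) • (Y (Y e) + Y e + (f (J e) - 1) • e) := by
        simp only [LinearMap.add_apply, LinearMap.smul_apply, End.one_apply, End.mul_apply,
          map_add, map_smul]
    _ = 0 := by simp only [hqe, map_zero, smul_zero, add_zero]

theorem exists_involution_apply_eq_smul (h2 : (2 : K) ≠ 0) (hJ : J * J = 1) (hfe : f e = 1)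
    (hY : ∀ x, Y x = J x - f x • e) {D : End K V} (hDY : D * Y = -(Y * D))
    (hDD : D * D = 1 + Y * Y) {x : V} (hx : f x = 0) (hJx : f (J x) ≠ 0) :
    ∃ c : K, J e = c • e := by
  have hcomm : Commute D (1 - Y * Y) :=
    (Commute.one_right D).sub_right (commute_mul_self_of_mul_eq_neg_mul hDY)
  have hlin := LinearMap.congr_fun (linear_mul_eq_zero_of_quadratic_mul_eq_zero h2 hDY hDD hcomm
    (quadratic_mul_one_sub_mul_self_eq_zero hJ hfe hY)) x
  have hNx : (1 - Y * Y) x = f (J x) • e := by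
    rw [one_sub_mul_self_apply hJ hY, hx, zero_smul, zero_add]
  rw [End.mul_apply, hNx, map_smul, LinearMap.zero_apply, smul_eq_zero_iff_right hJx] at hlin
  generalize f (J e) - 1 = k at hlin
  have hrel : (2 - k) • J e = (2 - 2 * k) • e := by
    rw [← sub_eq_zero, ← hlin]
    simp only [LinearMap.add_apply, LinearMap.smul_apply, End.one_apply, hY, hfe]
    module
  have hk : 2 - k ≠ 0 := by
    intro hk
    have hzero : (2 - 2 * k) • e = 0 := by rw [← hrel, hk, zero_smul]
    have := congrArg f hzero
    rw [map_smul, hfe, map_zero, smul_eq_mul, mul_one] at this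
    exact h2 (by linear_combination 2 * hk - this)
  exact ⟨(2 - k)⁻¹ * (2 - 2 * k), by rw [mul_smul, ← hrel, inv_smul_smul₀ hk]⟩

theorem finrank_range_one_sub_mul_self_le_one (h2 : (2 : K) ≠ 0) (hJ : J * J = 1)
    (hfe : f e = 1) (hY : ∀ x, Y x = J x - f x • e) {D : End K V} (hDY : D * Y = -(Y * D))
    (hDD : D * D = 1 + Y * Y) : finrank K (range (1 - Y * Y)) ≤ 1 := by
  suffices ∃ v, ∀ x, (1 - Y * Y) x ∈ K ∙ v by
    obtain ⟨v, hv⟩ := this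
    have hle : range (1 - Y * Y) ≤ K ∙ v := by
      rintro _ ⟨x, rfl⟩
      exact hv x
    exact (Submodule.finrank_mono hle).trans
      ((finrank_span_le_card {v}).trans_eq (by simp))
  simp only [one_sub_mul_self_apply hJ hY, Submodule.mem_span_singleton]
  by_cases h : ∃ x, f x = 0 ∧ f (J x) ≠ 0
  · obtain ⟨x, hx, hJx⟩ := h
    obtain ⟨c, hc⟩ := exists_involution_apply_eq_smul h2 hJ hfe hY hDY hDD hx hJx
    refine ⟨e, fun x ↦ ⟨f x * (c - 1) + f (J x), ?_⟩⟩
    rw [hY, hc, hfe]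
    module
  · push Not at h
    have hfJ (x) : f (J x) = f x * f (J e) := by
      have := h (x - f x • e) (by simp [hfe])
      simpa [sub_eq_zero] using this
    refine ⟨Y e + f (J e) • e, fun x ↦ ⟨f x, ?_⟩⟩
    rw [hfJ x, smul_add, mul_smul]

theorem one_sub_mul_self_ne_zero (h3 : (3 : K) ≠ 0) (hJ : J * J = 1) (hfe : f e = 1)
    (hY : ∀ x, Y x = J x - f x • e) : 1 - Y * Y ≠ 0 := by
  intro hN
  have hJe : J e = (1 - f (J e)) • e := by
    have hNe := one_sub_mul_self_apply hJ hY e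
    rw [hN, LinearMap.zero_apply, hY, hfe] at hNe
    rw [← sub_eq_zero, hNe]
    module
  have hJJe : J (J e) = e := LinearMap.congr_fun hJ e
  have hhalf : f (J e) = 1 - f (J e) := by
    simpa [hfe] using congrArg f hJe
  have hsq : (1 - f (J e)) * f (J e) = 1 := by
    have := congrArg f (congrArg J hJe)
    simpa [hfe, hJJe] using this.symm
  exact h3 (by linear_combination -4 * hsq - (2 * f (J e) - 1) * hhalf)

theorem odd_finrank_of_anticommute [FiniteDimensional K V]
    (h2 : (2 : K) ≠ 0) (h3 : (3 : K) ≠ 0) (hJ : J * J = 1) (hfe : f e = 1)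
    (hY : ∀ x, Y x = J x - f x • e) {D : End K V} (hDY : D * Y = -(Y * D))
    (hDD : D * D = 1 + Y * Y) : Odd (finrank K V) := by
  have hker := even_finrank_ker_one_sub_mul_self h2 hDY hDD
  have hrange : finrank K (range (1 - Y * Y)) = 1 :=
    le_antisymm (finrank_range_one_sub_mul_self_le_one h2 hJ hfe hY hDY hDD) <|
      Submodule.one_le_finrank_iff.mpr <| by
        rw [ne_eq, range_eq_bot]
        exact one_sub_mul_self_ne_zero h3 hJ hfe hY
  rw [← finrank_range_add_finrank_ker (1 - Y * Y), hrange]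
  exact hker.one_add

end RankOnePerturbation

theorem odd_finrank_of_isIdempotentElem_of_add_add_eq [CharP K 5] [FiniteDimensional K V]
    {A B E : End K V} (hA : IsIdempotentElem A) (hB : IsIdempotentElem B)
    (hE : IsIdempotentElem E) {e : V} {f : Dual K V} (hfe : f e = 1)
    (h : A + B + E = -1 + 3 • f.smulRight e) : Odd (finrank K V) := by
  have hK5 : (5 : K) = 0 := CharP.cast_eq_zero K 5
  have h5 : (5 : End K V) = 0 := by
    rw [← map_ofNat (algebraMap K (End K V)) 5, hK5, map_zero]
  have h2 : (2 : K) ≠ 0 := fun h2 ↦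
    one_ne_zero (by linear_combination hK5 - 2 * h2 : (1 : K) = 0)
  have h3 : (3 : K) ≠ 0 := fun h3 ↦
    one_ne_zero (by linear_combination 2 * h3 - hK5 : (1 : K) = 0)
  obtain ⟨J, D, hJ, hDY, hDD⟩ := exists_anticommute_of_add_add_eq h5 hA hB hE h
  exact RankOnePerturbation.odd_finrank_of_anticommute h2 h3 hJ hfe (fun _ ↦ rfl) hDY hDD

end LinearMap

theorem toLin'_diagonal_update_neg_one {ι R : Type*} [Fintype ι] [DecidableEq ι] [CommRing R]
    (i : ι) : Matrix.toLin' (Matrix.diagonal (Function.update (-1 : ι → R) i 2)) =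
      -1 + 3 • (LinearMap.proj i : Module.Dual R (ι → R)).smulRight (Pi.single i 1) := by
  refine LinearMap.ext fun x ↦ funext fun j ↦ ?_
  obtain rfl | hji := eq_or_ne j i
  · simp only [Matrix.toLin'_apply, Matrix.mulVec_diagonal, Function.update_self, nsmul_eq_mul,
      Nat.cast_ofNat, LinearMap.add_apply, LinearMap.neg_apply, Module.End.one_apply,
      Module.End.mul_apply, LinearMap.coe_smulRight, LinearMap.coe_proj, Function.eval, map_smul,
      Module.End.ofNat_apply, Pi.add_apply, Pi.neg_apply, Pi.smul_apply, Pi.mul_apply,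
      Pi.ofNat_apply, Pi.single_eq_same, mul_one, smul_eq_mul]
    ring
  · simp [Matrix.mulVec_diagonal, hji]

theorem diag_two_neg_ones_not_sum_three_idempotents_zmod5_general {K ι : Type*} [Field K]
    [CharP K 5] [Fintype ι] [DecidableEq ι] (hι : Even (Fintype.card ι)) (i : ι) :
    ¬ ∃ E₁ E₂ E₃ : Matrix ι ι K,
      E₁ * E₁ = E₁ ∧ E₂ * E₂ = E₂ ∧ E₃ * E₃ = E₃ ∧
        Matrix.diagonal (Function.update (-1) i 2) = E₁ + E₂ + E₃ := by
  rintro ⟨E₁, E₂, E₃, h₁, h₂, h₃, hsum⟩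
  let φ : Matrix ι ι K ≃ₐ[K] Module.End K (ι → K) := Matrix.toLinAlgEquiv'
  have hφsum : φ E₁ + φ E₂ + φ E₃ =
      -1 + 3 • (LinearMap.proj i : Module.Dual K (ι → K)).smulRight (Pi.single i 1) := by
    rw [← map_add, ← map_add, ← hsum]
    exact toLin'_diagonal_update_neg_one i
  have hodd := odd_finrank_of_isIdempotentElem_of_add_add_eq (IsIdempotentElem.map h₁ φ)
    (IsIdempotentElem.map h₂ φ) (IsIdempotentElem.map h₃ φ) (Pi.single_eq_same i 1) hφsum
  rw [Module.finrank_fintype_fun_eq_card] at hodd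
  exact Nat.not_odd_iff_even.mpr hι hodd

/-- For a positive even integer `n`, the diagonal matrix `diag(2, -1, …, -1)` is not a
sum of three idempotent matrices of `M_n(ℤ/5)`. -/
theorem diag_two_neg_ones_not_sum_three_idempotents_zmod5 (n : ℕ) (hn : 0 < n)
    (hne : Even n) :
    ¬ ∃ E₁ E₂ E₃ : Matrix (Fin n) (Fin n) (ZMod 5),
      E₁ * E₁ = E₁ ∧ E₂ * E₂ = E₂ ∧ E₃ * E₃ = E₃ ∧
        Matrix.diagonal (fun i : Fin n => if (i : ℕ) = 0 then (2 : ZMod 5) else -1)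
          = E₁ + E₂ + E₃ := by
  have : Fact (Nat.Prime 5) := ⟨Nat.prime_five⟩
  have hdiag : (fun i : Fin n => if (i : ℕ) = 0 then (2 : ZMod 5) else -1) =
      Function.update (-1) ⟨0, hn⟩ 2 := by
    ext i
    simp [Function.update_apply, Fin.ext_iff]
  rw [hdiag]
  exact diag_two_neg_ones_not_sum_three_idempotents_zmod5_general
    (by rwa [Fintype.card_fin]) _
end

section
/- Let F be a field and n ≥ 1. The following are equivalent: (1) every matrix in M_n(F) is a sum of three idempotent matrices; (2) every invertible matrix in M_n(F) is a sum of three idempotent matrices; (3) F is isomorphic to Z_2 or to Z_3. -/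
/-!
Over `ℤ/2` and `ℤ/3` every scalar is a sum of two idempotents, and by the primary decomposition it
suffices to treat multiplication by the root on `F[X]/(f)`. In the basis given by `1` and
`(X - (1 + δ)) * (X - 1) ^ k`, all columns of its matrix but the last agree with those of
`1 + N + diag(δ, 0, …, 0)`, where `N` is a nilpotent Jordan block. The columns of `1 + N` in even
positions form an idempotent matrix, and so do those in odd positions; the idempotent `δ` can be
absorbed by the latter. If the trace is `m + 1 + δ + ε` for an idempotent `ε`, scaling the last
column of `1 + N` by `ε` leaves a rank-one idempotent as remainder.

Conversely, the trace of an idempotent is an integer in `F`, while a unit `1 + (a - 1) • f ⊗ e` with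
`f e = 1` and `a ≠ 0` has trace `dim V + a - 1`, so `F` is a prime field. To exclude characteristics
other than `2` and `3`, replace the idempotents `E` by the involutions `2 * E - 1`: a sum of three
idempotents `A` gives involutions `r`, `s`, `t` with `r + s + t = 2 * A - 3`. The operator
`c = s * t + t * s + 1` commutes with `s` and `t`. On the quotient by its range, the commutator of
`s` and `t` is invertible, having square `-3`, and anticommutes with `s`, so the quotient has even
dimension: the rank of `c` has the parity of the dimension. In odd dimension `A = 3 / 2` is
impossible, since it gives `c = 0`. In even dimension, take `A` invertible such that `r + s + t` has
range spanned by some `e`. Then the range of `c` lies in the span of `e` and `r e`, and by parity it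
equals this plane, which is therefore invariant under all three involutions; comparing coefficients
there gives a contradiction.
-/

open Module Polynomial

/-- The property of being a sum of three idempotents, for an arbitrary type with `+` and `*` so that
it passes between matrices and endomorphisms. -/
def IsSumThreeIdempotents {R : Type*} [Mul R] [Add R] (a : R) : Prop :=
  ∃ e₁ e₂ e₃ : R,
    IsIdempotentElem e₁ ∧ IsIdempotentElem e₂ ∧ IsIdempotentElem e₃ ∧ a = e₁ + e₂ + e₃

lemma IsSumThreeIdempotents.map {R S G : Type*} [NonUnitalNonAssocSemiring R]
    [NonUnitalNonAssocSemiring S] [FunLike G R S] [NonUnitalRingHomClass G R S] {a : R}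
    (ha : IsSumThreeIdempotents a) (f : G) : IsSumThreeIdempotents (f a) := by
  obtain ⟨e₁, e₂, e₃, h₁, h₂, h₃, rfl⟩ := ha
  exact ⟨f e₁, f e₂, f e₃, h₁.map f, h₂.map f, h₃.map f, by simp only [map_add]⟩

lemma isIdempotentElem_piMap {R ι : Type*} {M : ι → Type*} [Semiring R]
    [∀ i, AddCommMonoid (M i)] [∀ i, Module R (M i)] {g : ∀ i, End R (M i)}
    (hg : ∀ i, IsIdempotentElem (g i)) :
    IsIdempotentElem (LinearMap.piMap g : End R (∀ i, M i)) :=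
  LinearMap.ext fun v ↦ funext fun i ↦ LinearMap.congr_fun (hg i) (v i)

lemma isSumThreeIdempotents_piMap {R ι : Type*} {M : ι → Type*} [Semiring R]
    [∀ i, AddCommMonoid (M i)] [∀ i, Module R (M i)] {g : ∀ i, End R (M i)}
    (hg : ∀ i, IsSumThreeIdempotents (g i)) :
    IsSumThreeIdempotents (LinearMap.piMap g : End R (∀ i, M i)) := by
  choose e₁ e₂ e₃ h₁ h₂ h₃ h using hg
  refine ⟨_, _, _, isIdempotentElem_piMap h₁, isIdempotentElem_piMap h₂,
    isIdempotentElem_piMap h₃, LinearMap.ext fun v ↦ funext fun i ↦ ?_⟩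
  exact LinearMap.congr_fun (h i) (v i)

lemma isIdempotentElem_one_add_mul {R : Type*} [Semiring R] {n p : R} (hp : IsIdempotentElem p)
    (hpn : p * n * p = 0) : IsIdempotentElem ((1 + n) * p) :=
  calc (1 + n) * p * ((1 + n) * p) = (1 + n) * (p * p + p * n * p) := by noncomm_ring
    _ = (1 + n) * p := by rw [hp.eq, hpn, add_zero]

section Matrix

open Matrix

variable {R : Type*} [Ring R]

lemma isIdempotentElem_vecMulVec_s6 {ι : Type*} [Fintype ι] {u v : ι → R} (h : v ⬝ᵥ u = 1) :
    IsIdempotentElem (vecMulVec u v) := by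
  rw [IsIdempotentElem, vecMulVec_mul_vecMulVec, h, one_smul]

/-- The nilpotent Jordan block with ones just below the diagonal, from which the normal form
`1 + lowerShift + diag(δ, 0, …, 0)` of a cyclic operator is built. -/
def lowerShift (R : Type*) [Zero R] [One R] (n : ℕ) : Matrix (Fin n) (Fin n) R :=
  of fun i j ↦ if (i : ℕ) = j + 1 then 1 else 0

lemma isIdempotentElem_one_add_lowerShift_mul_diagonal {n : ℕ} {d : Fin n → R}
    (hd : ∀ i, IsIdempotentElem (d i)) (hd' : ∀ i j : Fin n, (i : ℕ) = j + 1 → d i * d j = 0) :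
    IsIdempotentElem ((1 + lowerShift R n) * diagonal d) := by
  refine isIdempotentElem_one_add_mul ?_ ?_
  · simp only [IsIdempotentElem, diagonal_mul_diagonal, (hd _).eq]
  · ext i j
    simp only [lowerShift, mul_diagonal, diagonal_mul, of_apply, mul_ite, mul_one, mul_zero,
      ite_mul, zero_mul, Matrix.zero_apply]
    exact ite_eq_right_iff.2 (hd' i j)

lemma isIdempotentElem_one_add_lowerShift_mul_diagonal_add_single {m : ℕ}
    {d : Fin (m + 1) → R} {δ : R} (hd : ∀ i, IsIdempotentElem (d i))
    (hd' : ∀ i j : Fin (m + 1), (i : ℕ) = j + 1 → d i * d j = 0) (hd₀ : d 0 = 0)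
    (hδ : IsIdempotentElem δ) :
    IsIdempotentElem
      ((1 + lowerShift R (m + 1)) * diagonal d + diagonal (Pi.single 0 δ)) := by
  refine (isIdempotentElem_one_add_lowerShift_mul_diagonal hd hd').add ?_ ?_
  · simp only [diagonal_single, IsIdempotentElem, single_mul_single_same, hδ.eq]
  · have hright : diagonal d * diagonal (Pi.single 0 δ) = 0 := by
      ext i j
      rcases eq_or_ne j 0 with rfl | hj
      · rcases eq_or_ne i 0 with rfl | hi <;> simp [*]
      · simp [hj]
    have hleft : diagonal (Pi.single 0 δ) * ((1 + lowerShift R (m + 1)) * diagonal d) = 0 := by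
      ext i j
      rcases eq_or_ne i 0 with rfl | hi
      · rcases eq_or_ne j 0 with rfl | hj
        · simp [hd₀]
        · simp [diagonal_mul, lowerShift, hj.symm]
      · simp [diagonal_mul, hi]
    rw [hleft, mul_assoc, hright, mul_zero, add_zero]

lemma one_add_lowerShift_mul_diagonal_update_last {m : ℕ} (ε : R) :
    (1 + lowerShift R (m + 1)) * diagonal (Function.update 1 (Fin.last m) ε) =
      1 + lowerShift R (m + 1) - diagonal (Pi.single (Fin.last m) (1 - ε)) := by
  ext i j
  rcases eq_or_ne j (Fin.last m) with rfl | hj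
  · have hi : (i : ℕ) ≠ m + 1 := i.isLt.ne
    rcases eq_or_ne i (Fin.last m) with rfl | hi'
    · simp [lowerShift]
    · simp [lowerShift, hi, hi']
  · rcases eq_or_ne i j with rfl | hij <;> simp [*]

lemma exists_isIdempotentElem_add_eq_one_add_lowerShift_mul_diagonal {m : ℕ}
    {d : Fin (m + 1) → R} {δ : R} (hd : ∀ i, IsIdempotentElem (d i)) (hδ : IsIdempotentElem δ) :
    ∃ e₁ e₂ : Matrix (Fin (m + 1)) (Fin (m + 1)) R, IsIdempotentElem e₁ ∧ IsIdempotentElem e₂ ∧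
      e₁ + e₂ = (1 + lowerShift R (m + 1)) * diagonal d + diagonal (Pi.single 0 δ) := by
  let p : Fin (m + 1) → R := fun i ↦ if Even (i : ℕ) then d i else 0
  let q : Fin (m + 1) → R := fun i ↦ if Even (i : ℕ) then 0 else d i
  refine ⟨(1 + lowerShift R (m + 1)) * diagonal p,
    (1 + lowerShift R (m + 1)) * diagonal q + diagonal (Pi.single 0 δ),
    isIdempotentElem_one_add_lowerShift_mul_diagonal (fun i ↦ ?_) (fun i j hij ↦ ?_),
    isIdempotentElem_one_add_lowerShift_mul_diagonal_add_single (fun i ↦ ?_) (fun i j hij ↦ ?_)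
      (by simp [q]) hδ, ?_⟩
  · by_cases hi : Even (i : ℕ) <;> simp [p, hi, hd, IsIdempotentElem.zero]
  · by_cases hj : Even (j : ℕ) <;> simp [p, hij, hj, Nat.even_add_one]
  · by_cases hi : Even (i : ℕ) <;> simp [q, hi, hd, IsIdempotentElem.zero]
  · by_cases hj : Even (j : ℕ) <;> simp [q, hij, hj, Nat.even_add_one]
  · have hpq : diagonal p + diagonal q = diagonal d := by
      rw [diagonal_add]
      congr! with i
      by_cases hi : Even (i : ℕ) <;> simp [p, q, hi]
    rw [← add_assoc, ← mul_add, hpq]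

theorem isSumThreeIdempotents_one_add_lowerShift_add {m : ℕ} {δ : R} {u : Fin (m + 1) → R}
    (hδ : IsIdempotentElem δ) (hu : IsIdempotentElem (u (Fin.last m))) :
    IsSumThreeIdempotents (1 + lowerShift R (m + 1) + diagonal (Pi.single 0 δ) +
      vecMulVec u (Pi.single (Fin.last m) 1)) := by
  set ε := u (Fin.last m) with hε
  have hd (i : Fin (m + 1)) :
      IsIdempotentElem (Function.update (1 : Fin (m + 1) → R) (Fin.last m) ε i) := by
    rcases eq_or_ne i (Fin.last m) with rfl | hi
    · simpa using hu
    · simpa [hi] using IsIdempotentElem.one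
  obtain ⟨e₁, e₂, h₁, h₂, h⟩ :=
    exists_isIdempotentElem_add_eq_one_add_lowerShift_mul_diagonal hd hδ
  let w : Fin (m + 1) → R := u + Pi.single (Fin.last m) (1 - ε)
  have hw : vecMulVec w (Pi.single (Fin.last m) 1) =
      vecMulVec u (Pi.single (Fin.last m) 1) + diagonal (Pi.single (Fin.last m) (1 - ε)) := by
    rw [add_vecMulVec, diagonal_single]
    congr 1
    ext i j
    rcases eq_or_ne i (Fin.last m) with rfl | hi
    · simp [vecMulVec_apply, single_apply, Pi.single_apply, eq_comm]
    · simp [vecMulVec_apply, hi, hi.symm]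
  refine ⟨e₁, e₂, vecMulVec w (Pi.single (Fin.last m) 1), h₁, h₂,
    isIdempotentElem_vecMulVec_s6 (by simp [w, hε]), ?_⟩
  rw [h, hw, one_add_lowerShift_mul_diagonal_update_last]
  abel

theorem isSumThreeIdempotents_of_trace_eq {m : ℕ} {δ ε : R}
    {A : Matrix (Fin (m + 1)) (Fin (m + 1)) R}
    (hA : ∀ i (j : Fin m), A i j.castSucc =
      (1 + lowerShift R (m + 1) + diagonal (Pi.single 0 δ) : Matrix _ _ R) i j.castSucc)
    (hδ : IsIdempotentElem δ) (hε : IsIdempotentElem ε) (htr : A.trace = m + 1 + δ + ε) :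
    IsSumThreeIdempotents A := by
  set B := 1 + lowerShift R (m + 1) + diagonal (Pi.single 0 δ) with hB
  have hA' : A = B + vecMulVec ((A - B).col (Fin.last m)) (Pi.single (Fin.last m) 1) := by
    ext i j
    induction j using Fin.lastCases with
    | last => simp [vecMulVec_apply]
    | cast j => simp [vecMulVec_apply, hA]
  have htrB : B.trace = m + 1 + δ := by
    simp [hB, trace, lowerShift, Finset.sum_add_distrib]
  have hlast : (A - B).col (Fin.last m) (Fin.last m) = ε := by
    have := congrArg trace hA'
    rw [htr, trace_add, htrB, trace_vecMulVec, dotProduct_single, mul_one] at this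
    exact (add_left_cancel this).symm
  rw [hA']
  exact isSumThreeIdempotents_one_add_lowerShift_add hδ (hlast ▸ hε)

end Matrix

section CyclicBlock

/-- The polynomials `1` and `(X - (1 + δ)) * (X - 1) ^ k`. In this basis, multiplication by `X` has
the matrix `1 + lowerShift + diag(δ, 0, …, 0)`. -/
noncomputable def shiftSequence {R : Type*} [CommRing R] [IsDomain R] (δ : R) :
    Polynomial.Sequence R where
  elems'
    | 0 => 1
    | k + 1 => (X - C (1 + δ)) * (X - C 1) ^ k
  degree_eq'
    | 0 => degree_one
    | k + 1 => by
      rw [degree_mul, degree_pow, degree_X_sub_C, degree_X_sub_C, nsmul_one, add_comm]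
      rfl

lemma shiftSequence_zero {R : Type*} [CommRing R] [IsDomain R] (δ : R) :
    shiftSequence δ 0 = 1 := rfl

lemma shiftSequence_succ {R : Type*} [CommRing R] [IsDomain R] (δ : R) (k : ℕ) :
    shiftSequence δ (k + 1) = (X - C (1 + δ)) * (X - C 1) ^ k := rfl

lemma X_mul_shiftSequence {R : Type*} [CommRing R] [IsDomain R] (δ : R) (k : ℕ) :
    X * shiftSequence δ k =
      (1 + if k = 0 then δ else 0) • shiftSequence δ k + shiftSequence δ (k + 1) := by
  cases k with
  | zero => simp [shiftSequence_zero, shiftSequence_succ, smul_eq_C_mul]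
  | succ k =>
    simp only [shiftSequence_succ, Nat.add_eq_zero_iff, one_ne_zero, and_false, if_false, add_zero,
      one_smul, map_one]
    ring

variable {F : Type*} [Field F]

lemma linearIndependent_mk_sequence (S : Polynomial.Sequence F) {f : F[X]} {n : ℕ}
    (hn : (n : WithBot ℕ) ≤ f.degree) :
    LinearIndependent F fun k : Fin n ↦ AdjoinRoot.mk f (S k) := by
  have hspan : Submodule.span F (Set.range fun k : Fin n ↦ S k) ≤ degreeLT F n := by
    rw [Submodule.span_le]
    rintro _ ⟨k, rfl⟩
    simp [mem_degreeLT]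
  refine (S.linearIndependent.comp _ Fin.val_injective).map (f := (AdjoinRoot.mkₐ f).toLinearMap) ?_
  refine Submodule.disjoint_def.2 fun p hp hpf ↦ ?_
  exact eq_zero_of_dvd_of_degree_lt (AdjoinRoot.mk_eq_zero.1 hpf)
    ((mem_degreeLT.1 (hspan hp)).trans_le hn)

theorem isSumThreeIdempotents_of_basis {V : Type*} [AddCommGroup V] [Module F V] {m : ℕ}
    (b : Basis (Fin (m + 1)) F V) {φ : End F V} {δ ε : F}
    (hb : ∀ j : Fin m, φ (b j.castSucc) =
      (1 + if (j : ℕ) = 0 then δ else 0) • b j.castSucc + b j.succ)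
    (hδ : IsIdempotentElem δ) (hε : IsIdempotentElem ε)
    (htr : LinearMap.trace F V φ = m + 1 + δ + ε) : IsSumThreeIdempotents φ := by
  have hA : IsSumThreeIdempotents (LinearMap.toMatrixAlgEquiv b φ) := by
    refine isSumThreeIdempotents_of_trace_eq (fun i j ↦ ?_) hδ hε ?_
    · rw [LinearMap.toMatrixAlgEquiv_apply, hb]
      rcases eq_or_ne i j.castSucc with rfl | hi
      · simp [lowerShift, Pi.single_apply, Fin.ext_iff]
      · have : j.succ = i ↔ (i : ℕ) = j + 1 := by rw [Fin.ext_iff, Fin.val_succ, eq_comm]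
        simp [lowerShift, Finsupp.single_apply, hi, this]
    · rw [← htr, LinearMap.trace_eq_matrix_trace F b]
      rfl
  simpa using hA.map (LinearMap.toMatrixAlgEquiv b).symm

theorem isSumThreeIdempotents_mulLeft_root
    (hF : ∀ a : F, ∃ δ ε, IsIdempotentElem δ ∧ IsIdempotentElem ε ∧ a = δ + ε) {f : F[X]}
    (hf : f ≠ 0) : IsSumThreeIdempotents (LinearMap.mulLeft F (AdjoinRoot.root f)) := by
  have hrank : finrank F (AdjoinRoot f) = f.natDegree := finrank_quotient_span_eq_natDegree
  rcases hd : f.natDegree with _ | m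
  · have : FiniteDimensional F (AdjoinRoot f) := (AdjoinRoot.powerBasis hf).finite
    have : Subsingleton (AdjoinRoot f) := finrank_zero_iff.1 (hrank.trans hd)
    exact ⟨0, 0, 0, .zero, .zero, .zero, Subsingleton.elim _ _⟩
  obtain ⟨δ, ε, hδ, hε, htr⟩ :=
    hF (LinearMap.trace F _ (LinearMap.mulLeft F (AdjoinRoot.root f)) - (m + 1))
  have hli := linearIndependent_mk_sequence (shiftSequence δ) (f := f) (n := m + 1)
    (by rw [degree_eq_natDegree hf, hd])
  let b := basisOfLinearIndependentOfCardEqFinrank hli (by rw [hrank, hd, Fintype.card_fin])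
  refine isSumThreeIdempotents_of_basis b (fun j ↦ ?_) hδ hε (by linear_combination htr)
  have := congrArg (AdjoinRoot.mk f) (X_mul_shiftSequence δ j)
  simpa only [Fin.val_castSucc, Fin.val_succ, b, coe_basisOfLinearIndependentOfCardEqFinrank,
    map_mul, map_add, AdjoinRoot.mk_X, ← AdjoinRoot.smul_mk, LinearMap.mulLeft_apply] using this

theorem isSumThreeIdempotents_end
    (hF : ∀ a : F, ∃ δ ε, IsIdempotentElem δ ∧ IsIdempotentElem ε ∧ a = δ + ε)
    {V : Type*} [AddCommGroup V] [Module F V] [FiniteDimensional F V] (φ : End F V) :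
    IsSumThreeIdempotents φ := by
  classical
  obtain ⟨ι, _, p, hp, k, ⟨l⟩⟩ :=
    equiv_directSum_of_isTorsion (AEval.isTorsion_of_finiteDimensional F V φ)
  let L := l.trans (DirectSum.linearEquivFunOnFintype F[X] ι _)
  let L' : V ≃ₗ[F] ∀ i, AdjoinRoot (p i ^ k i) := (AEval'.of φ).trans (L.restrictScalars F)
  have hL (v : V) (i : ι) : L' (φ v) i = AdjoinRoot.root (p i ^ k i) * L' v i := by
    have := congrFun (L.map_smul X (AEval'.of φ v)) i
    rwa [AEval'.X_smul_of, Pi.smul_apply, Algebra.smul_def] at this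
  have hblocks := isSumThreeIdempotents_piMap fun i ↦
    isSumThreeIdempotents_mulLeft_root hF (pow_ne_zero (k i) (hp i).ne_zero)
  have hφ : L'.conjRingEquiv φ =
      LinearMap.piMap fun i ↦ LinearMap.mulLeft F (AdjoinRoot.root (p i ^ k i)) :=
    LinearMap.ext fun w ↦ funext fun i ↦ by simp [LinearEquiv.conjRingEquiv, hL]
  simpa [← hφ] using hblocks.map L'.conjRingEquiv.symm

theorem isSumThreeIdempotents_matrix
    (hF : ∀ a : F, ∃ δ ε, IsIdempotentElem δ ∧ IsIdempotentElem ε ∧ a = δ + ε) {ι : Type*}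
    [Fintype ι] (A : Matrix ι ι F) : IsSumThreeIdempotents A := by
  classical
  simpa using (isSumThreeIdempotents_end hF (Matrix.toLinAlgEquiv' A)).map
    (LinearMap.toMatrixAlgEquiv' (R := F) (n := ι))

end CyclicBlock

section Involutions

lemma IsSumThreeIdempotents.exists_involutions {R : Type*} [Ring R] {a : R}
    (ha : IsSumThreeIdempotents a) :
    ∃ r s t : R, r * r = 1 ∧ s * s = 1 ∧ t * t = 1 ∧ r + s + t = 2 * a - 3 := by
  have hinv {e : R} (he : IsIdempotentElem e) : (2 * e - 1) * (2 * e - 1) = 1 :=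
    calc (2 * e - 1) * (2 * e - 1) = 4 * (e * e) - 4 * e + 1 := by noncomm_ring
      _ = 1 := by rw [he.eq, sub_self, zero_add]
  obtain ⟨e₁, e₂, e₃, h₁, h₂, h₃, rfl⟩ := ha
  exact ⟨_, _, _, hinv h₁, hinv h₂, hinv h₃, by
    rw [show (3 : R) = 1 + 1 + 1 by norm_num]; noncomm_ring⟩

lemma commute_anticommutator_add_one {R : Type*} [Ring R] {s : R} (hs : s * s = 1) (t : R) :
    Commute s (s * t + t * s + 1) := by
  simp only [Commute, SemiconjBy, mul_add, add_mul, ← mul_assoc, hs, mul_one, one_mul]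
  rw [mul_assoc t s s, hs, mul_one, add_comm t]

lemma anticommutator_add_one_eq {R : Type*} [Ring R] {s t : R} (hs : s * s = 1)
    (ht : t * t = 1) : s * t + t * s + 1 = (s + t) * (s + t) - 1 := by
  simp only [mul_add, add_mul, hs, ht]
  abel

lemma sq_commutator_of_anticommutator_add_one_eq_zero {R : Type*} [Ring R] {s t : R}
    (hs : s * s = 1) (ht : t * t = 1) (hst : s * t + t * s + 1 = 0) :
    (s * t - t * s) ^ 2 = -3 := by
  have hts : t * s = -1 - s * t := by rw [← sub_eq_zero, ← hst]; abel
  have hp : s * t * (s * t) = -1 - s * t :=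
    calc s * t * (s * t) = s * (t * s) * t := by noncomm_ring
      _ = -(s * t) - s * s * (t * t) := by rw [hts]; noncomm_ring
      _ = -1 - s * t := by rw [hs, ht]; noncomm_ring
  calc (s * t - t * s) ^ 2 = 4 * (s * t * (s * t)) + 4 * (s * t) + 1 := by
        rw [hts]; noncomm_ring
    _ = -3 := by rw [hp, mul_sub, sub_add_cancel]; norm_num

variable {F V : Type*} [Field F] [AddCommGroup V] [Module F V] {r s t : End F V} {e : V}
  {f : Dual F V}

lemma anticommutator_add_one_apply (hr : r * r = 1) (hs : s * s = 1) (ht : t * t = 1)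
    (h : ∀ v, r v + s v + t v = f v • e) (v : V) :
    (s * t + t * s + 1) v = (f v * f e - f (r v)) • e - f v • r e := by
  have hst (w : V) : (s + t) w = f w • e - r w := by
    rw [← h, LinearMap.add_apply]; abel
  calc (s * t + t * s + 1) v = ((s + t) * (s + t) - 1) v := by
        rw [anticommutator_add_one_eq hs ht]
    _ = f (f v • e - r v) • e - r (f v • e - r v) - v := by
        rw [LinearMap.sub_apply, Module.End.mul_apply, hst, hst]; rfl
    _ = (f v * f e - f (r v)) • e - f v • r e := by
        have hrr : r (r v) = v := LinearMap.congr_fun hr v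
        rw [map_sub, map_sub, map_smul, map_smul, hrr, smul_eq_mul]; abel

lemma exists_apply_eq_of_involution {u : V} {α β : F} (hs : s * s = 1)
    (hse : s e = α • e + β • u) (hβ : β ≠ 0) : ∃ γ : F, s u = γ • e - α • u := by
  have hse' := LinearMap.congr_fun hs e
  rw [Module.End.mul_apply, hse, map_add, map_smul, map_smul, hse, Module.End.one_apply] at hse'
  have hβu : β • s u = (1 - α ^ 2) • e - β • α • u := by
    linear_combination (norm := module) hse'
  refine ⟨β⁻¹ * (1 - α ^ 2), ?_⟩
  rw [← inv_smul_smul₀ hβ (s u), hβu, smul_sub, inv_smul_smul₀ hβ, smul_smul]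

variable [FiniteDimensional F V]

lemma even_finrank_of_mul_eq_neg_mul_s6 (h2 : (2 : F) ≠ 0) {u v : End F V} (hu : IsUnit u)
    (hv : IsUnit v) (huv : u * v = -(v * u)) : Even (finrank F V) := by
  by_contra hodd
  have hdet := congrArg LinearMap.det huv
  rw [← neg_one_smul F (v * u), LinearMap.det_smul,
    (Nat.not_even_iff_odd.1 hodd).neg_one_pow, map_mul, map_mul] at hdet
  have hzero : 2 * (LinearMap.det u * LinearMap.det v) = 0 := by linear_combination hdet
  exact mul_ne_zero h2 ((hu.map LinearMap.det).mul (hv.map LinearMap.det)).ne_zero hzero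

lemma even_finrank_of_anticommutator_add_one_eq_zero (h2 : (2 : F) ≠ 0) (h3 : (3 : F) ≠ 0)
    (hs : s * s = 1) (ht : t * t = 1) (hst : s * t + t * s + 1 = 0) :
    Even (finrank F V) := by
  have hd : IsUnit (s * t - t * s) := by
    rw [← isUnit_pow_iff two_ne_zero, sq_commutator_of_anticommutator_add_one_eq_zero hs ht hst]
    simpa only [map_ofNat] using ((IsUnit.mk0 _ h3).map (algebraMap F (End F V))).neg
  refine even_finrank_of_mul_eq_neg_mul_s6 h2 (.of_mul_eq_one s hs) hd ?_
  calc s * (s * t - t * s) = s * s * t - s * t * s := by noncomm_ring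
    _ = -(s * t * s - t * (s * s)) := by rw [hs]; noncomm_ring
    _ = -((s * t - t * s) * s) := by noncomm_ring

lemma even_finrank_range_anticommutator_add_one (h2 : (2 : F) ≠ 0) (h3 : (3 : F) ≠ 0)
    (hs : s * s = 1) (ht : t * t = 1) (hV : Even (finrank F V)) :
    Even (finrank F (LinearMap.range (s * t + t * s + 1))) := by
  set c := s * t + t * s + 1 with hc
  have hquot : Even (finrank F (V ⧸ LinearMap.range c)) := by
    have hinv {u : End F V} (hu : Commute u c) :
        LinearMap.range c ≤ (LinearMap.range c).comap u := by
      rintro _ ⟨x, rfl⟩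
      exact ⟨u x, (LinearMap.congr_fun hu.eq x).symm⟩
    have hs' := hinv (commute_anticommutator_add_one hs t)
    have ht' := hinv (u := t) (by
      rw [hc, add_comm (s * t)]; exact commute_anticommutator_add_one ht s)
    refine even_finrank_of_anticommutator_add_one_eq_zero h2 h3
      (s := Submodule.mapQ _ _ s hs') (t := Submodule.mapQ _ _ t ht') ?_ ?_ ?_
    · exact Submodule.linearMap_qext _ <| LinearMap.ext fun v ↦
        congrArg _ (LinearMap.congr_fun hs v)
    · exact Submodule.linearMap_qext _ <| LinearMap.ext fun v ↦
        congrArg _ (LinearMap.congr_fun ht v)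
    · exact Submodule.linearMap_qext _ <| LinearMap.ext fun v ↦
        (Submodule.Quotient.mk_eq_zero _).2 (LinearMap.mem_range_self c v)
  exact (Nat.even_add.1 ((LinearMap.range c).finrank_quotient_add_finrank ▸ hV)).1 hquot

lemma even_finrank_of_add_eq_zero (h2 : (2 : F) ≠ 0) (h3 : (3 : F) ≠ 0)
    (hr : r * r = 1) (hs : s * s = 1) (ht : t * t = 1) (h : r + s + t = 0) :
    Even (finrank F V) := by
  refine even_finrank_of_anticommutator_add_one_eq_zero h2 h3 hs ht ?_
  have hst : s + t = -r := eq_neg_of_add_eq_zero_right (by rwa [← add_assoc])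
  rw [anticommutator_add_one_eq hs ht, hst, neg_mul_neg, hr, sub_self]

lemma linearIndependent_pair_of_involutions_add_eq_smul (h2 : (2 : F) ≠ 0) (h3 : (3 : F) ≠ 0)
    (hV : Even (finrank F V)) (hr : r * r = 1) (hs : s * s = 1) (ht : t * t = 1)
    (h : ∀ v, r v + s v + t v = f v • e) (hfe : f e ≠ 0) (hfe' : f e ^ 2 ≠ 4) :
    LinearIndependent F ![e, r e] := by
  have he : e ≠ 0 := by rintro rfl; exact hfe (map_zero f)
  refine (LinearIndependent.pair_iff' he).2 fun μ hμ ↦ hfe' ?_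
  set c := s * t + t * s + 1 with hc
  have hc_apply := anticommutator_add_one_apply hr hs ht h
  have hrange : LinearMap.range c ≤ F ∙ e := by
    rintro _ ⟨v, rfl⟩
    rw [hc_apply, ← hμ, smul_smul, ← sub_smul]
    exact Submodule.smul_mem _ _ (Submodule.mem_span_singleton_self e)
  have hc_zero : c = 0 := by
    have hle := (Submodule.finrank_mono hrange).trans_eq (finrank_span_singleton he)
    have heven := Nat.even_iff.1 <|
      hc ▸ even_finrank_range_anticommutator_add_one h2 h3 hs ht hV
    rw [← LinearMap.range_eq_bot, ← Submodule.finrank_eq_zero]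
    omega
  have hfe_eq : f e = 2 * μ := by
    have := hc_apply e
    rw [← hc, hc_zero, ← hμ, map_smul, smul_smul, ← sub_smul, LinearMap.zero_apply, eq_comm,
      smul_eq_zero_iff_left he, smul_eq_mul] at this
    exact mul_left_cancel₀ hfe (by linear_combination this)
  have hμ_sq : μ * μ = 1 := by
    have := LinearMap.congr_fun hr e
    rw [Module.End.mul_apply, ← hμ, map_smul, ← hμ, smul_smul, Module.End.one_apply] at this
    exact smul_left_injective F he (this.trans (one_smul F e).symm)
  rw [hfe_eq]
  linear_combination 4 * hμ_sq

lemma apply_mem_span_pair_of_involutions_add_eq_smul (h2 : (2 : F) ≠ 0) (h3 : (3 : F) ≠ 0)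
    (hV : Even (finrank F V)) (hr : r * r = 1) (hs : s * s = 1) (ht : t * t = 1)
    (h : ∀ v, r v + s v + t v = f v • e) (hfe : f e ≠ 0) (hfe' : f e ^ 2 ≠ 4) :
    s e ∈ Submodule.span F {e, r e} := by
  have hli := linearIndependent_pair_of_involutions_add_eq_smul h2 h3 hV hr hs ht h hfe hfe'
  set c := s * t + t * s + 1 with hc
  have hc_apply := anticommutator_add_one_apply hr hs ht h
  have hle : LinearMap.range c ≤ Submodule.span F {e, r e} := by
    rintro _ ⟨v, rfl⟩
    exact Submodule.mem_span_pair.2 ⟨f v * f e - f (r v), -f v, by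
      rw [hc_apply, neg_smul, ← sub_eq_add_neg]⟩
  have hc_ne : c ≠ 0 := fun hzero ↦ by
    have := hc_apply e
    rw [← hc, hzero, LinearMap.zero_apply, sub_eq_add_neg, ← neg_smul] at this
    exact hfe (neg_eq_zero.1 (LinearIndependent.pair_iff.1 hli _ _ this.symm).2)
  have hrange : LinearMap.range c = Submodule.span F {e, r e} := by
    refine Submodule.eq_of_le_of_finrank_le hle ?_
    have heven := Nat.even_iff.1 <|
      hc ▸ even_finrank_range_anticommutator_add_one h2 h3 hs ht hV
    have hpos : finrank F (LinearMap.range c) ≠ 0 := by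
      rwa [Ne, Submodule.finrank_eq_zero, LinearMap.range_eq_bot]
    have hspan := finrank_span_eq_card hli
    rw [Matrix.range_cons_cons_empty, Fintype.card_fin] at hspan
    omega
  obtain ⟨x, hx⟩ : e ∈ LinearMap.range c := hrange ▸ Submodule.subset_span (Set.mem_insert e _)
  rw [← hrange]
  refine ⟨s x, ?_⟩
  have := LinearMap.congr_fun (commute_anticommutator_add_one hs t).eq x
  rw [← hx]
  exact this.symm

theorem not_even_finrank_of_involutions_add_eq_smul (h2 : (2 : F) ≠ 0) (h3 : (3 : F) ≠ 0)
    (hr : r * r = 1) (hs : s * s = 1) (ht : t * t = 1) (h : ∀ v, r v + s v + t v = f v • e)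
    (hfe : f e ≠ 0) (hfe' : f e ^ 2 ≠ 4) : ¬ Even (finrank F V) := by
  intro hV
  have hre := linearIndependent_pair_of_involutions_add_eq_smul h2 h3 hV hr hs ht h hfe hfe'
  have hse := linearIndependent_pair_of_involutions_add_eq_smul h2 h3 hV hs hr ht
    (fun v ↦ by rw [← h]; abel) hfe hfe'
  have hte := linearIndependent_pair_of_involutions_add_eq_smul h2 h3 hV ht hr hs
    (fun v ↦ by rw [← h]; abel) hfe hfe'
  obtain ⟨α, β, hαβ⟩ := Submodule.mem_span_pair.1
    (apply_mem_span_pair_of_involutions_add_eq_smul h2 h3 hV hr hs ht h hfe hfe')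
  have he : e ≠ 0 := by rintro rfl; exact hfe (map_zero f)
  rw [LinearIndependent.pair_iff' he] at hse hte
  have hte_eq : t e = (f e - α) • e + (-(1 + β)) • r e := by
    linear_combination (norm := module) h e + hαβ
  have hβ : β ≠ 0 := by
    rintro rfl
    exact hse α (by simpa using hαβ)
  have hβ' : -(1 + β) ≠ 0 := fun h0 ↦ hte (f e - α) (by simp [hte_eq, h0])
  obtain ⟨γ, hγ⟩ := exists_apply_eq_of_involution hs hαβ.symm hβ
  obtain ⟨γ', hγ'⟩ := exists_apply_eq_of_involution ht hte_eq hβ'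
  have hu := h (r e)
  rw [hγ, hγ', ← Module.End.mul_apply, hr, Module.End.one_apply] at hu
  have : (1 + γ + γ' - f (r e)) • e + (-f e) • r e = 0 := by
    rw [← sub_eq_zero] at hu
    rw [← hu]
    module
  exact hfe (neg_eq_zero.1 (LinearIndependent.pair_iff.1 hre _ _ this).2)

lemma even_finrank_of_isSumThreeIdempotents_algebraMap (h2 : (2 : F) ≠ 0) (h3 : (3 : F) ≠ 0)
    (h : IsSumThreeIdempotents (algebraMap F (End F V) (3 / 2))) : Even (finrank F V) := by
  obtain ⟨r, s, t, hr, hs, ht, hsum⟩ := h.exists_involutions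
  refine even_finrank_of_add_eq_zero h2 h3 hr hs ht ?_
  rw [hsum, ← map_ofNat (algebraMap F (End F V)) 2, ← map_mul, mul_div_cancel₀ _ h2, map_ofNat,
    sub_self]

lemma not_even_finrank_of_isSumThreeIdempotents_smul_transvection (h2 : (2 : F) ≠ 0)
    (h3 : (3 : F) ≠ 0) (hfe : f e = 1)
    (h : IsSumThreeIdempotents ((3 / 2 : F) • LinearMap.transvection f ((-1 / 3 : F) • e))) :
    ¬ Even (finrank F V) := by
  obtain ⟨r, s, t, hr, hs, ht, hsum⟩ := h.exists_involutions
  refine not_even_finrank_of_involutions_add_eq_smul (e := -e) (f := f) h2 h3 hr hs ht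
    (fun v ↦ ?_) ?_ ?_
  · calc r v + s v + t v
        = (2 : F) • (3 / 2 : F) • LinearMap.transvection f ((-1 / 3 : F) • e) v - (3 : F) • v := by
          simpa [two_mul, two_smul, ofNat_smul_eq_nsmul] using LinearMap.congr_fun hsum v
      _ = f v • -e := by
          rw [LinearMap.transvection.apply]
          match_scalars <;> field_simp
          ring
  · rw [map_neg, hfe]
    exact neg_ne_zero.2 one_ne_zero
  · rw [map_neg, hfe, neg_one_sq]
    exact fun h14 ↦ h3 (by linear_combination -h14)

theorem two_eq_zero_or_three_eq_zero_of_isUnit_isSumThreeIdempotents [Nontrivial V]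
    (h : ∀ φ : End F V, IsUnit φ → IsSumThreeIdempotents φ) : (2 : F) = 0 ∨ (3 : F) = 0 := by
  by_contra! ⟨h2, h3⟩
  have h32 : (3 / 2 : F) ≠ 0 := div_ne_zero h3 h2
  obtain ⟨e, he⟩ := exists_ne (0 : V)
  obtain ⟨f, hfe⟩ := Module.Projective.exists_dual_eq_one F he
  have hunit : IsUnit ((3 / 2 : F) • LinearMap.transvection f ((-1 / 3 : F) • e)) := by
    rw [LinearMap.isUnit_iff_isUnit_det, LinearMap.det_smul, LinearMap.transvection.det,
      map_smul, hfe, smul_eq_mul, mul_one, isUnit_iff_ne_zero]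
    refine mul_ne_zero (pow_ne_zero _ h32) ?_
    rw [show (1 + -1 / 3 : F) = 2 / 3 by field_simp; norm_num]
    exact div_ne_zero h2 h3
  exact not_even_finrank_of_isSumThreeIdempotents_smul_transvection h2 h3 hfe (h _ hunit)
    (even_finrank_of_isSumThreeIdempotents_algebraMap h2 h3 (h _ ((IsUnit.mk0 _ h32).map _)))

end Involutions

section Prime

variable {F V : Type*} [Field F] [AddCommGroup V] [Module F V] [FiniteDimensional F V]

lemma IsSumThreeIdempotents.exists_natCast_eq_trace {φ : End F V}
    (hφ : IsSumThreeIdempotents φ) : ∃ k : ℕ, (k : F) = LinearMap.trace F V φ := by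
  obtain ⟨e₁, e₂, e₃, h₁, h₂, h₃, rfl⟩ := hφ
  refine ⟨finrank F (LinearMap.range e₁) + finrank F (LinearMap.range e₂) +
    finrank F (LinearMap.range e₃), ?_⟩
  rw [← LinearMap.isProj_range_iff_isIdempotentElem] at h₁ h₂ h₃
  rw [map_add, map_add, h₁.trace, h₂.trace, h₃.trace, Nat.cast_add, Nat.cast_add]

theorem intCast_surjective_of_isUnit_isSumThreeIdempotents [Nontrivial V]
    (h : ∀ φ : End F V, IsUnit φ → IsSumThreeIdempotents φ) :
    Function.Surjective (Int.cast : ℤ → F) := by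
  intro a
  rcases eq_or_ne a 0 with rfl | ha
  · exact ⟨0, Int.cast_zero⟩
  obtain ⟨e, he⟩ := exists_ne (0 : V)
  obtain ⟨f, hf⟩ := Module.Projective.exists_dual_eq_one F he
  have hunit : IsUnit (LinearMap.transvection f ((a - 1) • e)) := by
    rw [LinearMap.isUnit_iff_isUnit_det, LinearMap.transvection.det, map_smul, hf, smul_eq_mul,
      mul_one, add_sub_cancel]
    exact ha.isUnit
  have htrace : LinearMap.trace F V (LinearMap.transvection f ((a - 1) • e)) =
      finrank F V + (a - 1) := by
    have : LinearMap.transvection f ((a - 1) • e) = 1 + f.smulRight ((a - 1) • e) := rfl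
    rw [this, map_add, LinearMap.trace_one, LinearMap.trace_smulRight, map_smul, hf, smul_eq_mul,
      mul_one]
  obtain ⟨k, hk⟩ := (h _ hunit).exists_natCast_eq_trace
  refine ⟨k - finrank F V + 1, ?_⟩
  push_cast
  rw [hk, htrace]
  ring

lemma nonempty_ringEquiv_zmod_of_intCast_surjective {R : Type*} [Ring R] (p : ℕ) [CharP R p]
    (h : Function.Surjective (Int.cast : ℤ → R)) : Nonempty (R ≃+* ZMod p) := by
  refine ⟨(RingEquiv.ofBijective (ZMod.castHom dvd_rfl R)
    ⟨ZMod.castHom_injective R, fun a ↦ ?_⟩).symm⟩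
  obtain ⟨k, rfl⟩ := h a
  exact ⟨k, map_intCast _ k⟩

theorem nonempty_ringEquiv_zmod_of_isUnit_isSumThreeIdempotents [Nontrivial V]
    (h : ∀ φ : End F V, IsUnit φ → IsSumThreeIdempotents φ) :
    Nonempty (F ≃+* ZMod 2) ∨ Nonempty (F ≃+* ZMod 3) := by
  have hsurj := intCast_surjective_of_isUnit_isSumThreeIdempotents h
  refine (two_eq_zero_or_three_eq_zero_of_isUnit_isSumThreeIdempotents h).imp (fun h2 ↦ ?_)
    fun h3 ↦ ?_
  · have : CharP F 2 := (CharP.charP_iff_prime_eq_zero Nat.prime_two).2 h2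
    exact nonempty_ringEquiv_zmod_of_intCast_surjective 2 hsurj
  · have : CharP F 3 := (CharP.charP_iff_prime_eq_zero Nat.prime_three).2 h3
    exact nonempty_ringEquiv_zmod_of_intCast_surjective 3 hsurj

theorem nonempty_ringEquiv_zmod_of_isUnit_isSumThreeIdempotents_matrix {ι : Type*} [Fintype ι]
    [DecidableEq ι] [Nonempty ι]
    (h : ∀ A : Matrix ι ι F, IsUnit A → IsSumThreeIdempotents A) :
    Nonempty (F ≃+* ZMod 2) ∨ Nonempty (F ≃+* ZMod 3) :=
  nonempty_ringEquiv_zmod_of_isUnit_isSumThreeIdempotents (V := ι → F) fun φ hφ ↦ by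
    simpa using (h _ (hφ.map LinearMap.toMatrixAlgEquiv')).map
      (Matrix.toLinAlgEquiv' (R := F) (n := ι))

end Prime

lemma forall_exists_isIdempotentElem_add_eq_of_ringEquiv {R S : Type*} [Mul R] [Add R] [Mul S]
    [Add S] (f : R ≃+* S)
    (h : ∀ b : S, ∃ δ ε, IsIdempotentElem δ ∧ IsIdempotentElem ε ∧ b = δ + ε) (a : R) :
    ∃ δ ε, IsIdempotentElem δ ∧ IsIdempotentElem ε ∧ a = δ + ε := by
  obtain ⟨δ, ε, hδ, hε, hab⟩ := h (f a)
  exact ⟨f.symm δ, f.symm ε, hδ.map f.symm, hε.map f.symm, by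
    rw [← map_add, ← hab, f.symm_apply_apply]⟩

lemma exists_isIdempotentElem_add_eq_zmod_two (a : ZMod 2) :
    ∃ δ ε, IsIdempotentElem δ ∧ IsIdempotentElem ε ∧ a = δ + ε := by
  unfold IsIdempotentElem; decide +revert

lemma exists_isIdempotentElem_add_eq_zmod_three (a : ZMod 3) :
    ∃ δ ε, IsIdempotentElem δ ∧ IsIdempotentElem ε ∧ a = δ + ε := by
  unfold IsIdempotentElem; decide +revert

/-- For a field `F` and `n ≥ 1`, the following are equivalent:
(1) every matrix in `M_n(F)` is a sum of three idempotents;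
(2) every invertible matrix in `M_n(F)` is a sum of three idempotents;
(3) `F ≅ ℤ/2` or `F ≅ ℤ/3`. -/
theorem matrix_sum_three_idempotents_field_tfae (F : Type*) [Field F] (n : ℕ) (hn : 1 ≤ n) :
    List.TFAE [
      ∀ A : Matrix (Fin n) (Fin n) F,
        ∃ E₁ E₂ E₃ : Matrix (Fin n) (Fin n) F,
          E₁ * E₁ = E₁ ∧ E₂ * E₂ = E₂ ∧ E₃ * E₃ = E₃ ∧ A = E₁ + E₂ + E₃,
      ∀ A : Matrix (Fin n) (Fin n) F, IsUnit A →
        ∃ E₁ E₂ E₃ : Matrix (Fin n) (Fin n) F,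
          E₁ * E₁ = E₁ ∧ E₂ * E₂ = E₂ ∧ E₃ * E₃ = E₃ ∧ A = E₁ + E₂ + E₃,
      Nonempty (F ≃+* ZMod 2) ∨ Nonempty (F ≃+* ZMod 3)] := by
  have : Nonempty (Fin n) := Fin.pos_iff_nonempty.1 hn
  tfae_have 1 → 2 := fun h A _ ↦ h A
  tfae_have 2 → 3 := fun h ↦ nonempty_ringEquiv_zmod_of_isUnit_isSumThreeIdempotents_matrix h
  tfae_have 3 → 1 := by
    rintro (⟨⟨f⟩⟩ | ⟨⟨f⟩⟩)
    · exact isSumThreeIdempotents_matrix <|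
        forall_exists_isIdempotentElem_add_eq_of_ringEquiv f exists_isIdempotentElem_add_eq_zmod_two
    · exact isSumThreeIdempotents_matrix <|
        forall_exists_isIdempotentElem_add_eq_of_ringEquiv f
          exists_isIdempotentElem_add_eq_zmod_three
  tfae_finish
end

section
/- Let R be an integral domain and n ≥ 1. Then every matrix in M_n(R) is a sum of three idempotent matrices if and only if R is isomorphic to Z_2 or to Z_3. -/
/-!
Over a domain the trace of an idempotent matrix is a natural number. If every matrix is a sum of
three idempotents, then every element of `R`, being a trace, is a natural number, so `R` is a prime
field `𝔽_p`.

Two idempotents `p`, `q` satisfy `(p - q)² = 1 - (p + q - 1)²`, and `p - q` anticommutes with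
`p + q - 1`. In a decomposition `4 = e + p + q` the latter is `3 - e`, and outside the
characteristics `2`, `3`, `5` these relations force first `p = q` and then `5 e = 8`, which is
absurd. In characteristic `5` they make `3 - e` and `p - q` anticommuting units, which do not exist
in odd dimension. In even dimension the scalar matrix `4 = -1` is perturbed by a matrix of rank one
and trace `2`; the relations bound the ranks of the three idempotents so tightly that each of them
has half the dimension as its rank, and then the traces do not add up.

Conversely, let every scalar be a sum of two idempotents, as is the case in `𝔽_2` and `𝔽_3`. Every
endomorphism is a direct sum of multiplications by `X` on quotients `K[X] ⧸ (f)`. The basis of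
Newton polynomials with nodes `s, 1, 1, …` turns multiplication by `X` into a lower bidiagonal
matrix up to its last column. Pairing basis vectors according to the parity of their index splits
the bidiagonal matrix into two idempotents, and the correction in the last column is the third
idempotent once its trace is `1`, which is arranged through the choice of `s` and of the last
diagonal entry.
-/

section SumsOfIdempotents

variable {A B F : Type*} {k : ℕ}

/-- The element `a` is a sum of `k` idempotents. The summands form a family indexed by `Fin k`, so
they may repeat or vanish, and they need not commute. -/
def IsSumOfIdempotents [NonUnitalNonAssocSemiring A] (k : ℕ) (a : A) : Prop :=
  ∃ e : Fin k → A, (∀ i, IsIdempotentElem (e i)) ∧ ∑ i, e i = a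

namespace IsSumOfIdempotents

variable [NonUnitalNonAssocSemiring A] [NonUnitalNonAssocSemiring B] {a : A}

theorem two_iff :
    IsSumOfIdempotents 2 a ↔ ∃ e p : A, IsIdempotentElem e ∧ IsIdempotentElem p ∧ a = e + p := by
  constructor
  · rintro ⟨e, he, rfl⟩
    exact ⟨e 0, e 1, he 0, he 1, Fin.sum_univ_two e⟩
  · rintro ⟨e, p, he, hp, rfl⟩
    exact ⟨![e, p], by simp [Fin.forall_fin_succ, he, hp], by simp⟩

theorem three_iff :
    IsSumOfIdempotents 3 a ↔ ∃ e p q : A,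
      IsIdempotentElem e ∧ IsIdempotentElem p ∧ IsIdempotentElem q ∧ a = e + p + q := by
  constructor
  · rintro ⟨e, he, rfl⟩
    exact ⟨e 0, e 1, e 2, he 0, he 1, he 2, Fin.sum_univ_three e⟩
  · rintro ⟨e, p, q, he, hp, hq, rfl⟩
    exact ⟨![e, p, q], by simp [Fin.forall_fin_succ, he, hp, hq], by simp [Fin.sum_univ_three]⟩

theorem map [FunLike F A B] [NonUnitalRingHomClass F A B] (f : F) (ha : IsSumOfIdempotents k a) :
    IsSumOfIdempotents k (f a) := by
  obtain ⟨e, he, rfl⟩ := ha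
  exact ⟨fun i => f (e i), fun i => (he i).map f, (map_sum f e _).symm⟩

theorem forall_congr (f : A ≃+* B) :
    (∀ a : A, IsSumOfIdempotents k a) ↔ ∀ b : B, IsSumOfIdempotents k b :=
  ⟨fun h b => by simpa using (h (f.symm b)).map f, fun h a => by simpa using (h (f a)).map f.symm⟩

end IsSumOfIdempotents

end SumsOfIdempotents

section Trace

variable {R ι : Type*} [CommRing R] [IsDomain R] [Fintype ι]

theorem exists_trace_eq_natCast_of_isIdempotentElem {M : Matrix ι ι R} (hM : IsIdempotentElem M) :
    ∃ r : ℕ, M.trace = r := by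
  classical
  let K := FractionRing R
  let T : Module.End K (ι → K) := Matrix.toLin' ((algebraMap R K).mapMatrix M)
  have hT : IsIdempotentElem T :=
    (hM.map (algebraMap R K).mapMatrix).map Matrix.toLinAlgEquiv'
  refine ⟨Module.finrank K (LinearMap.range T), IsFractionRing.injective R K ?_⟩
  rw [map_natCast, ← (LinearMap.IsIdempotentElem.isProj_range T hT).trace, Matrix.trace_toLin'_eq]
  exact AddMonoidHom.map_trace (algebraMap R K) M

theorem natCast_surjective_of_forall_isSumOfIdempotents [Nonempty ι] {k : ℕ}
    (h : ∀ M : Matrix ι ι R, IsSumOfIdempotents k M) :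
    Function.Surjective (Nat.cast : ℕ → R) := by
  classical
  intro r
  let i : ι := Classical.arbitrary ι
  obtain ⟨E, hE, hsum⟩ := h (Matrix.single i i r)
  choose rank hrank using fun j => exists_trace_eq_natCast_of_isIdempotentElem (hE j)
  refine ⟨∑ j, rank j, ?_⟩
  rw [Nat.cast_sum, ← Matrix.trace_single_eq_same i r, ← hsum, Matrix.trace_sum]
  exact Finset.sum_congr rfl fun j _ => (hrank j).symm

theorem exists_prime_ringEquiv_zmod_of_natCast_surjective
    (h : Function.Surjective (Nat.cast : ℕ → R)) :
    ∃ p : ℕ, p.Prime ∧ Nonempty (R ≃+* ZMod p) := by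
  obtain ⟨p, hp⟩ := CharP.exists R
  obtain ⟨m, hm⟩ := h (-1)
  have hp0 : p ≠ 0 := by
    rintro rfl
    have : ((m + 1 : ℕ) : R) = 0 := by rw [Nat.cast_succ, hm, neg_add_cancel]
    exact m.succ_ne_zero (Nat.eq_zero_of_zero_dvd ((CharP.cast_eq_zero_iff R 0 _).1 this))
  have hbij : Function.Bijective (ZMod.castHom dvd_rfl R) :=
    ⟨ZMod.castHom_injective R, fun r => by
      obtain ⟨l, rfl⟩ := h r
      exact ⟨l, map_natCast _ l⟩⟩
  exact ⟨p, (CharP.char_is_prime_or_zero R p).resolve_right hp0,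
    ⟨(RingEquiv.ofBijective _ hbij).symm⟩⟩

end Trace

section TwoIdempotents

variable {A : Type*} [Ring A] {e p q : A}

theorem add_sub_one_mul_sub_of_isIdempotentElem
    (hp : IsIdempotentElem p) (hq : IsIdempotentElem q) :
    (p + q - 1) * (p - q) = -((p - q) * (p + q - 1)) := by
  simp only [mul_sub, sub_mul, mul_add, add_mul, hp.eq, hq.eq, mul_one, one_mul]
  abel

theorem sub_mul_self_of_isIdempotentElem_s7 (hp : IsIdempotentElem p) (hq : IsIdempotentElem q) :
    (p - q) * (p - q) = 1 - (p + q - 1) * (p + q - 1) := by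
  simp only [mul_sub, sub_mul, mul_add, add_mul, hp.eq, hq.eq, mul_one, one_mul]
  abel

theorem three_sub_mul_self_of_isIdempotentElem (he : IsIdempotentElem e) :
    (3 - e) * (3 - e) = 9 - 5 * e := by
  linear_combination (norm := (noncomm_ring; norm_num)) he.eq

theorem three_sub_mul_sub_of_four_eq (hp : IsIdempotentElem p) (hq : IsIdempotentElem q)
    (h : 4 = e + p + q) : (3 - e) * (p - q) = -((p - q) * (3 - e)) := by
  have hs : 3 - e = p + q - 1 := by
    linear_combination (norm := (noncomm_ring; norm_num)) h
  rw [hs, add_sub_one_mul_sub_of_isIdempotentElem hp hq]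

theorem sub_mul_self_of_four_eq (he : IsIdempotentElem e) (hp : IsIdempotentElem p)
    (hq : IsIdempotentElem q) (h : 4 = e + p + q) : (p - q) * (p - q) = 5 * e - 8 := by
  have hs : p + q - 1 = 3 - e := by
    linear_combination (norm := (noncomm_ring; norm_num)) -h
  rw [sub_mul_self_of_isIdempotentElem_s7 hp hq, hs, three_sub_mul_self_of_isIdempotentElem he]
  linear_combination (norm := (noncomm_ring; norm_num))

theorem sub_eq_zero_of_four_eq (h30 : IsUnit (30 : A)) (he : IsIdempotentElem e)
    (hp : IsIdempotentElem p) (hq : IsIdempotentElem q) (h : 4 = e + p + q) : p - q = 0 := by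
  have cancel {x : A} (hx : 30 * x = 0) : x = 0 := h30.mul_right_eq_zero.1 hx
  have hanti := three_sub_mul_sub_of_four_eq hp hq h
  generalize p - q = c at *
  -- `c` commutes with `(3 - e)² = 9 - 5 e`, hence with `e`
  have hcomm : e * c - c * e = 0 := cancel <| by
    linear_combination (norm := noncomm_ring)
      6 * (he.eq * c - c * he.eq - (3 - e) * hanti + hanti * (3 - e))
  have hzero : (3 - e) * c = 0 := cancel <| by
    linear_combination (norm := noncomm_ring) 15 * hanti - 15 * hcomm
  have hsix : (2 + e) * (3 - e) = 6 := by
    linear_combination (norm := (noncomm_ring; norm_num)) -he.eq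
  refine cancel ?_
  linear_combination (norm := noncomm_ring) 5 * (2 + e) * hzero - 5 * hsix * c

theorem not_isSumOfIdempotents_three_four [Nontrivial A] (h30 : IsUnit (30 : A)) :
    ¬ IsSumOfIdempotents 3 (4 : A) := by
  rw [IsSumOfIdempotents.three_iff]
  rintro ⟨e, p, q, he, hp, hq, h⟩
  have cancel {x : A} (hx : 30 * x = 0) : x = 0 := h30.mul_right_eq_zero.1 hx
  have hsq := sub_mul_self_of_four_eq he hp hq h
  have hscalar : 5 * e = 8 := by
    rw [sub_eq_zero_of_four_eq h30 he hp hq h, zero_mul] at hsq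
    exact sub_eq_zero.1 hsq.symm
  -- an idempotent `8 / 5` would give `64 = 40`
  have h24 : (24 : A) = 0 := by
    linear_combination (norm := (noncomm_ring; norm_num)) 25 * he.eq - 5 * e * hscalar - 3 * hscalar
  refine one_ne_zero (α := A) (cancel (cancel (cancel ?_)))
  linear_combination (norm := (noncomm_ring; norm_num)) 1125 * h24

end TwoIdempotents

section Obstruction

open Module

variable {K V : Type*} [Field K] [AddCommGroup V] [Module K V]

theorem even_finrank_of_mul_eq_neg_mul_s7 (h2 : (2 : K) ≠ 0) {S C : End K V} (hS : IsUnit S)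
    (hC : IsUnit C) (h : S * C = -(C * S)) : Even (finrank K V) := by
  have hdet : (-1 : K) ^ finrank K V * (S.det * C.det) = 1 * (S.det * C.det) := by
    rw [one_mul, mul_comm S.det, ← map_mul, ← LinearMap.det_smul, neg_one_smul, ← h, map_mul,
      map_mul, mul_comm]
  have hpow : (-1 : K) ^ finrank K V = 1 :=
    mul_right_cancel₀ ((hS.map LinearMap.det).mul (hC.map LinearMap.det)).ne_zero hdet
  by_contra hodd
  rw [(Nat.not_even_iff_odd.1 hodd).neg_one_pow] at hpow
  exact h2 (by linear_combination -hpow)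

theorem five_end_eq_zero (h5 : (5 : K) = 0) : (5 : End K V) = 0 := by
  rw [← map_ofNat (algebraMap K (End K V)), h5, map_zero]

theorem not_isSumOfIdempotents_three_four_of_odd_finrank (h5 : (5 : K) = 0)
    (hodd : Odd (finrank K V)) : ¬ IsSumOfIdempotents 3 (4 : End K V) := by
  rw [IsSumOfIdempotents.three_iff]
  rintro ⟨E, P, Q, hE, hP, hQ, h⟩
  have hfive := five_end_eq_zero (V := V) h5
  have hS : IsUnit (3 - E) := by
    refine (isUnit_pow_iff two_ne_zero).1 ?_
    have : (3 - E) ^ 2 = -1 := by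
      rw [sq, three_sub_mul_self_of_isIdempotentElem hE]
      linear_combination (norm := (noncomm_ring; norm_num)) (2 - E) * hfive
    rw [this]
    exact isUnit_one.neg
  have hC : IsUnit (P - Q) := by
    refine (isUnit_pow_iff four_ne_zero).1 ?_
    have : (P - Q) ^ 4 = -1 := by
      rw [pow_succ, pow_succ, sq, mul_assoc, sub_mul_self_of_four_eq hE hP hQ h]
      linear_combination (norm := (noncomm_ring; norm_num))
        (5 * E * E - 16 * E + 13) * hfive
    rw [this]
    exact isUnit_one.neg
  have h2 : (2 : K) ≠ 0 := fun h2 => one_ne_zero (α := K) (by linear_combination h5 - 2 * h2)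
  exact Nat.not_even_iff_odd.2 hodd
    (even_finrank_of_mul_eq_neg_mul_s7 h2 hS hC (three_sub_mul_sub_of_four_eq hP hQ h))

section RankOnePerturbation

variable {E P Q : End K V} {f : Dual K V} {w : V}

theorem eq_zero_of_add_add_eq (h5 : (5 : K) = 0) (hP : IsIdempotentElem P)
    (hQ : IsIdempotentElem Q) (h : E + P + Q = f.smulRight w - 1) (hw : f w ≠ 1) {v : V}
    (hv : E v = v) (hfv : f v = 0) (hEv : E ((P - Q) v) = (P - Q) v) : v = 0 := by
  -- `P + Q - 1` acts on `v` as `2`, hence on `u = (P - Q) v` as `-2`, which makes `E u` a multiple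
  -- of `w`; since `f w ≠ 1`, the relation `E u = u` leaves only `u = 0`.
  have hS (x : V) : (P + Q - 1) x = f x • w - (2 : K) • x - E x := by
    have := congr($h x)
    simp only [LinearMap.add_apply, LinearMap.sub_apply, LinearMap.smulRight_apply,
      Module.End.one_apply] at this ⊢
    linear_combination (norm := module) this
  have hSv : (P + Q - 1) v = (2 : K) • v := by
    rw [hS, hfv, hv]
    linear_combination (norm := module) -h5 • v
  have hSC := congr($(add_sub_one_mul_sub_of_isIdempotentElem hP hQ) v)
  have hCC := congr($(sub_mul_self_of_isIdempotentElem_s7 hP hQ) v)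
  simp only [Module.End.mul_apply, LinearMap.neg_apply, LinearMap.sub_apply (1 : End K V),
    Module.End.one_apply, hSv, map_smul] at hSC hCC
  have hu : f ((P - Q) v) • w = (P - Q) v := by
    rw [hS, hEv] at hSC
    linear_combination (norm := module) hSC
  have hfu : f ((P - Q) v) = 0 := by
    have := congr(f $hu)
    rw [map_smul, smul_eq_mul] at this
    by_contra hne
    exact hw ((mul_eq_left₀ hne).1 this)
  rw [← hu, hfu, zero_smul, map_zero] at hCC
  linear_combination (norm := module) 2 • h5 • v - 3 • hCC

theorem finrank_range_le_finrank_ker_add_one_of_add_add_eq [FiniteDimensional K V]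
    (h5 : (5 : K) = 0)
    (hE : IsIdempotentElem E) (hP : IsIdempotentElem P) (hQ : IsIdempotentElem Q)
    (h : E + P + Q = f.smulRight w - 1) (hw : f w ≠ 1) :
    finrank K (LinearMap.range E) ≤ finrank K (LinearMap.ker E) + 1 := by
  let T : V →ₗ[K] LinearMap.ker E × K :=
    (((1 - E) * (P - Q)).codRestrict (LinearMap.ker E) fun v => by
      rw [Module.End.mul_apply, LinearMap.IsIdempotentElem.ker_eq_range_one_sub hE]
      exact LinearMap.mem_range_self _ _).prod f
  have hT : Function.Injective (T ∘ₗ (LinearMap.range E).subtype) := by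
    refine (injective_iff_map_eq_zero _).2 fun ⟨v, hv⟩ hTv => ?_
    obtain ⟨hCv, hfv⟩ := Prod.ext_iff.1 hTv
    refine Subtype.ext (eq_zero_of_add_add_eq h5 hP hQ h hw
      ((LinearMap.IsIdempotentElem.mem_range_iff hE).1 hv) hfv ?_)
    exact (sub_eq_zero.1 (congrArg Subtype.val hCv)).symm
  simpa using LinearMap.finrank_le_finrank_of_injective hT

theorem two_mul_finrank_range_eq_finrank_of_add_add_eq [FiniteDimensional K V] (h5 : (5 : K) = 0)
    (heven : Even (finrank K V))
    (hE : IsIdempotentElem E) (hP : IsIdempotentElem P) (hQ : IsIdempotentElem Q)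
    (h : E + P + Q = f.smulRight w - 1) (hw : f w ≠ 1) (hw' : f w ≠ -1) :
    2 * finrank K (LinearMap.range E) = finrank K V := by
  have hfive := five_end_eq_zero (V := V) h5
  -- the complementary idempotents satisfy the same kind of equation, since `3 + 1 = -1`
  have hcompl : (1 - E) + (1 - P) + (1 - Q) = f.smulRight (-w) - 1 := by
    have hneg : f.smulRight (-w) = -f.smulRight w := by ext; simp
    rw [hneg]
    linear_combination (norm := (noncomm_ring; norm_num)) hfive - h
  have hle := finrank_range_le_finrank_ker_add_one_of_add_add_eq h5 hE hP hQ h hw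
  have hge := finrank_range_le_finrank_ker_add_one_of_add_add_eq h5 hE.one_sub hP.one_sub hQ.one_sub
    hcompl (by rwa [map_neg, ne_eq, neg_eq_iff_eq_neg])
  rw [← LinearMap.IsIdempotentElem.ker_eq_range_one_sub hE,
    ← LinearMap.IsIdempotentElem.range_eq_ker_one_sub hE] at hge
  have hadd := LinearMap.finrank_range_add_finrank_ker E
  obtain ⟨r, hr⟩ := heven
  omega

theorem apply_eq_of_isSumOfIdempotents_smulRight_sub_one [FiniteDimensional K V] (h5 : (5 : K) = 0)
    (heven : Even (finrank K V)) (h : IsSumOfIdempotents 3 (f.smulRight w - 1 : End K V)) :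
    f w = 0 ∨ f w = 1 ∨ f w = -1 := by
  obtain ⟨E, P, Q, hE, hP, hQ, h⟩ := IsSumOfIdempotents.three_iff.1 h
  by_contra! hne
  obtain ⟨h0, h1, hneg⟩ := hne
  have htrace {E P Q : End K V} (hE : IsIdempotentElem E) (hP : IsIdempotentElem P)
      (hQ : IsIdempotentElem Q) (h : E + P + Q = f.smulRight w - 1) :
      2 * LinearMap.trace K V E = finrank K V := by
    rw [(LinearMap.IsIdempotentElem.isProj_range E hE).trace]
    have := two_mul_finrank_range_eq_finrank_of_add_add_eq h5 heven hE hP hQ h h1 hneg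
    rw [← this, Nat.cast_mul, Nat.cast_two]
  have hsum := congr(LinearMap.trace K V $h)
  simp only [map_sub, map_add, LinearMap.trace_smulRight, LinearMap.trace_one] at hsum
  have hE' := htrace hE hP hQ h.symm
  have hP' := htrace hP hE hQ (by rw [add_comm P, h])
  have hQ' := htrace hQ hP hE (by rw [add_comm, ← add_assoc, add_right_comm, h])
  refine h0 ?_
  linear_combination 6 * hsum + 3 * (hE' + hP' + hQ') + (3 * (finrank K V : K) - f w) * h5

end RankOnePerturbation

theorem exists_not_isSumOfIdempotents_three [Nontrivial V] [FiniteDimensional K V]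
    (h2 : (2 : K) ≠ 0) (h3 : (3 : K) ≠ 0) : ∃ φ : End K V, ¬ IsSumOfIdempotents 3 φ := by
  by_cases h5 : (5 : K) = 0
  · rcases Nat.even_or_odd (finrank K V) with heven | hodd
    · obtain ⟨v, hv⟩ := exists_ne (0 : V)
      obtain ⟨f, hf⟩ := Module.Projective.exists_dual_eq_one K hv
      refine ⟨f.smulRight ((2 : K) • v) - 1, fun h => ?_⟩
      have := apply_eq_of_isSumOfIdempotents_smulRight_sub_one h5 heven h
      rw [map_smul, hf, smul_eq_mul, mul_one] at this
      rcases this with h | h | h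
      · exact h2 h
      · exact one_ne_zero (α := K) (by linear_combination h)
      · exact h3 (by linear_combination h)
    · exact ⟨4, not_isSumOfIdempotents_three_four_of_odd_finrank h5 hodd⟩
  · have h30 : (30 : K) ≠ 0 := by
      have := mul_ne_zero (mul_ne_zero h2 h3) h5
      norm_num at this
      exact this
    refine ⟨4, not_isSumOfIdempotents_three_four ?_⟩
    rw [← map_ofNat (algebraMap K (End K V))]
    exact (IsUnit.mk0 _ h30).map _

end Obstruction

section Bidiagonal

open Module

variable {R V : Type*} [CommRing R] [AddCommGroup V] [Module R V]

theorem isSumOfIdempotents_two_of_bidiagonal {m : ℕ} (b : Basis (Fin (m + 1)) R V) {d : ℕ → R}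
    {t : R} (hd₀ : IsIdempotentElem (d 0)) (hd : ∀ i, d (i + 1) = 1) (ht : IsIdempotentElem t)
    {ψ : End R V} (hψ : ∀ i : Fin m, ψ (b i.castSucc) = b i.succ + d i • b i.castSucc)
    (hlast : ψ (b (Fin.last m)) = (t + d m) • b (Fin.last m)) : IsSumOfIdempotents 2 ψ := by
  let next : Fin (m + 1) → V := Fin.lastCases (t • b (Fin.last m)) fun i => b i.succ
  let E : End R V := b.constr R fun i => if Even (i : ℕ) then next i else b i
  let P : End R V := b.constr R fun i => if Even (i : ℕ) then d i • b i else next i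
  have next_last : next (Fin.last m) = t • b (Fin.last m) := Fin.lastCases_last
  have next_cast (i : Fin m) : next i.castSucc = b i.succ := Fin.lastCases_castSucc i
  have hE (i : Fin (m + 1)) : E (b i) = if Even (i : ℕ) then next i else b i :=
    b.constr_basis R _ i
  have hP (i : Fin (m + 1)) : P (b i) = if Even (i : ℕ) then d i • b i else next i :=
    b.constr_basis R _ i
  have hd_idem : ∀ i, IsIdempotentElem (d i)
    | 0 => hd₀
    | i + 1 => by rw [hd]; exact .one
  have hE_next (i : Fin (m + 1)) (hi : Even (i : ℕ)) : E (next i) = next i := by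
    cases i using Fin.lastCases with
    | last => rw [next_last, map_smul, hE, if_pos hi, next_last, smul_smul, ht.eq]
    | cast i => rw [next_cast, hE, if_neg (by simpa [Nat.even_add_one] using hi)]
  have hP_next (i : Fin (m + 1)) (hi : ¬ Even (i : ℕ)) : P (next i) = next i := by
    cases i using Fin.lastCases with
    | last => rw [next_last, map_smul, hP, if_neg hi, next_last, smul_smul, ht.eq]
    | cast i =>
      rw [next_cast, hP, if_pos (by simpa [Nat.even_add_one] using hi), Fin.val_succ, hd, one_smul]
  have hsum (i : Fin (m + 1)) : ψ (b i) = next i + d i • b i := by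
    cases i using Fin.lastCases with
    | last => rw [hlast, next_last, add_smul, Fin.val_last]
    | cast i => rw [hψ, next_cast, Fin.val_castSucc]
  refine IsSumOfIdempotents.two_iff.2
    ⟨E, P, b.ext fun i => ?_, b.ext fun i => ?_, b.ext fun i => ?_⟩
  · by_cases hi : Even (i : ℕ) <;> simp [hE, hi, hE_next]
  · by_cases hi : Even (i : ℕ) <;> simp [hP, hi, hP_next, smul_smul, (hd_idem i).eq]
  · rw [hsum, LinearMap.add_apply, hE, hP]
    split_ifs with hi
    · rfl
    · obtain ⟨j, hj⟩ := Nat.exists_eq_succ_of_ne_zero (n := i) fun h => hi (h ▸ Even.zero)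
      rw [hj, hd, one_smul, add_comm]

theorem isIdempotentElem_smulRight {f : Dual R V} {w : V} (h : f w = 1) :
    IsIdempotentElem (f.smulRight w : End R V) := by
  ext v
  simp [h]

theorem isSumOfIdempotents_three_of_trace_eq {m : ℕ} (b : Basis (Fin (m + 1)) R V) {d : ℕ → R}
    {t : R} (hd₀ : IsIdempotentElem (d 0)) (hd : ∀ i, d (i + 1) = 1) (ht : IsIdempotentElem t)
    {φ : End R V} (hφ : ∀ i : Fin m, φ (b i.castSucc) = b i.succ + d i • b i.castSucc)
    (htrace : LinearMap.trace R V φ = ∑ i : Fin (m + 1), d i + t + 1) :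
    IsSumOfIdempotents 3 φ := by
  let w : V := φ (b (Fin.last m)) - (t + d m) • b (Fin.last m)
  let Q : End R V := (b.coord (Fin.last m)).smulRight w
  have hQ (i : Fin m) : Q (b i.castSucc) = 0 := by
    simp [Q, Fin.ext_iff, i.2.ne]
  have hQlast : Q (b (Fin.last m)) = w := by simp [Q]
  have hdiag (i : Fin m) : b.repr (φ (b i.castSucc)) i.castSucc = d i := by
    simp [hφ, Fin.ext_iff]
  have hw : b.coord (Fin.last m) w = 1 := by
    rw [LinearMap.trace_eq_matrix_trace R b, Matrix.trace, Fin.sum_univ_castSucc,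
      Fin.sum_univ_castSucc] at htrace
    simp only [Matrix.diag_apply, LinearMap.toMatrix_apply, hdiag, Fin.val_castSucc,
      Fin.val_last] at htrace
    simp only [w, map_sub, map_smul, Basis.coord_apply, Basis.repr_self, Finsupp.single_eq_same,
      smul_eq_mul]
    linear_combination htrace
  obtain ⟨E, P, hE, hP, hEP⟩ := IsSumOfIdempotents.two_iff.1 <|
    isSumOfIdempotents_two_of_bidiagonal b (ψ := φ - Q) hd₀ hd ht
      (fun i => by rw [LinearMap.sub_apply, hQ, sub_zero, hφ])
      (by rw [LinearMap.sub_apply, hQlast, sub_sub_cancel])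
  exact IsSumOfIdempotents.three_iff.2
    ⟨E, P, Q, hE, hP, isIdempotentElem_smulRight hw, by rw [← hEP, sub_add_cancel]⟩

end Bidiagonal

section Cyclic

open Module Polynomial

variable {K : Type*} [Field K]

/-- The Newton polynomials `∏_{j < i} (X - d j)` with nodes `d 0, d 1, …`, repetitions allowed. -/
noncomputable def newtonSequence (d : ℕ → K) : Polynomial.Sequence K where
  elems' i := Lagrange.nodal (Finset.range i) d
  degree_eq' i := by rw [Lagrange.degree_nodal, Finset.card_range]

theorem X_mul_newtonSequence (d : ℕ → K) (i : ℕ) :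
    X * newtonSequence d i = newtonSequence d (i + 1) + d i • newtonSequence d i := by
  change X * Lagrange.nodal (Finset.range i) d =
    Lagrange.nodal (Finset.range (i + 1)) d + d i • Lagrange.nodal (Finset.range i) d
  rw [Finset.range_add_one, Lagrange.nodal_insert_eq_nodal Finset.notMem_range_self, smul_eq_C_mul]
  ring

theorem exists_basis_quotient_span_singleton {f : K[X]} (hf : f ≠ 0) (S : Polynomial.Sequence K) :
    ∃ b : Basis (Fin f.natDegree) K (K[X] ⧸ Submodule.span K[X] {f}),
      ∀ i, b i = Submodule.Quotient.mk (S i) := by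
  let π := (Submodule.mkQ (Submodule.span K[X] {f})).restrictScalars K
  have hli : LinearIndependent K fun i : Fin f.natDegree => S i :=
    S.linearIndependent.comp _ Fin.val_injective
  have hdisj : Disjoint (Submodule.span K (Set.range fun i : Fin f.natDegree => S i))
      (LinearMap.ker π) := by
    refine Submodule.disjoint_def.2 fun g hg hπ => ?_
    have hdvd : f ∣ g := Ideal.mem_span_singleton.1 ((Submodule.Quotient.mk_eq_zero _).1 hπ)
    refine eq_zero_of_dvd_of_degree_lt hdvd ?_
    rw [degree_eq_natDegree hf, ← mem_degreeLT]
    refine Submodule.span_le.2 ?_ hg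
    rintro _ ⟨i, rfl⟩
    simp [mem_degreeLT, S.degree_eq]
  have : FiniteDimensional K (K[X] ⧸ Submodule.span K[X] {f}) := (AdjoinRoot.powerBasis hf).finite
  refine ⟨basisOfLinearIndependentOfCardEqFinrank' _ (hli.map hdisj) ?_, fun i => ?_⟩
  · rw [Fintype.card_fin, finrank_quotient_span_eq_natDegree]
  · exact congrFun (coe_basisOfLinearIndependentOfCardEqFinrank' _ _ _) i

theorem isSumOfIdempotents_three_lsmul_X (hK : ∀ c : K, IsSumOfIdempotents 2 c) {f : K[X]}
    (hf : f ≠ 0) :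
    IsSumOfIdempotents 3 (Algebra.lsmul K K (K[X] ⧸ Submodule.span K[X] {f}) (X : K[X])) := by
  set φ := Algebra.lsmul K K (K[X] ⧸ Submodule.span K[X] {f}) (X : K[X])
  obtain ⟨s, t, hs, ht, hst⟩ :=
    IsSumOfIdempotents.two_iff.1 (hK (LinearMap.trace K _ φ - f.natDegree))
  let d (i : ℕ) : K := if i = 0 then s else 1
  obtain ⟨b, hb⟩ := exists_basis_quotient_span_singleton hf (newtonSequence d)
  generalize f.natDegree = k at b hb hst
  cases k with
  | zero =>
    have : Subsingleton (K[X] ⧸ Submodule.span K[X] {f}) := b.repr.toEquiv.subsingleton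
    exact ⟨0, fun _ => .zero, Subsingleton.elim _ _⟩
  | succ m =>
    refine isSumOfIdempotents_three_of_trace_eq b (d := d) hs (fun i => if_neg i.succ_ne_zero) ht
      (fun i => ?_) ?_
    · rw [hb, hb, Fin.val_castSucc, Fin.val_succ]
      exact congrArg (Submodule.Quotient.mk (p := Submodule.span K[X] {f}))
        (X_mul_newtonSequence d i)
    · have hsum : ∑ i : Fin (m + 1), d i = s + m := by simp [d, Fin.sum_univ_succ]
      rw [hsum]
      push_cast at hst
      linear_combination hst

end Cyclic

section FiniteDimensional

open Module Polynomial

theorem isSumOfIdempotents_lmap {R ι : Type*} [Semiring R] {N : ι → Type*}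
    [∀ i, AddCommMonoid (N i)] [∀ i, Module R (N i)] {k : ℕ} {φ : ∀ i, End R (N i)}
    (hφ : ∀ i, IsSumOfIdempotents k (φ i)) :
    IsSumOfIdempotents k (DirectSum.lmap φ : End R (DirectSum ι N)) := by
  choose e he hsum using hφ
  refine ⟨fun j => DirectSum.lmap fun i => e i j, fun j => ?_, ?_⟩
  · rw [IsIdempotentElem, End.mul_eq_comp, ← DirectSum.lmap_comp]
    exact congrArg DirectSum.lmap (funext fun i => he i j)
  · ext x i
    simp [← hsum]

theorem isSumOfIdempotents_three_of_forall_two {K V : Type*} [Field K] [AddCommGroup V]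
    [Module K V] [FiniteDimensional K V] (hK : ∀ c : K, IsSumOfIdempotents 2 c) (φ : End K V) :
    IsSumOfIdempotents 3 φ := by
  obtain ⟨ι, _, p, hp, e, ⟨L⟩⟩ := Module.equiv_directSum_of_isTorsion
    (AEval.isTorsion_of_finiteDimensional K V φ)
  classical
  let Φ : V ≃ₗ[K] _ := (AEval'.of φ).trans (L.restrictScalars K)
  let D := DirectSum.lmap fun i =>
    Algebra.lsmul K K (K[X] ⧸ Submodule.span K[X] {p i ^ e i}) (X : K[X])
  have hD : IsSumOfIdempotents 3 (D : End K _) := isSumOfIdempotents_lmap fun i =>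
    isSumOfIdempotents_three_lsmul_X hK (pow_ne_zero (e i) (hp i).ne_zero)
  have hΦ (v : V) : Φ (φ v) = D (Φ v) :=
    calc Φ (φ v) = L (X • AEval'.of φ v) := by rw [AEval'.X_smul_of]; rfl
      _ = X • L (AEval'.of φ v) := map_smul L _ _
      _ = D (Φ v) := by ext i; rfl
  have hφ : φ = Φ.symm.conjRingEquiv D := LinearMap.ext fun v => Φ.eq_symm_apply.2 (hΦ v)
  rw [hφ]
  exact hD.map Φ.symm.conjRingEquiv

theorem forall_zmod_isSumOfIdempotents_two {p : ℕ} (hp : p = 2 ∨ p = 3) :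
    ∀ c : ZMod p, IsSumOfIdempotents 2 c := by
  simp only [IsSumOfIdempotents.two_iff, IsIdempotentElem]
  rcases hp with rfl | rfl <;> decide

theorem forall_end_zmod_isSumOfIdempotents_three_iff {p : ℕ} [Fact p.Prime] {V : Type*}
    [AddCommGroup V] [Module (ZMod p) V] [Nontrivial V] [FiniteDimensional (ZMod p) V] :
    (∀ φ : End (ZMod p) V, IsSumOfIdempotents 3 φ) ↔ p = 2 ∨ p = 3 := by
  constructor
  · intro h
    by_contra! hp
    have ne_zero (q : ℕ) (hq : q.Prime) (hpq : p ≠ q) : (q : ZMod p) ≠ 0 := by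
      rwa [Ne, ZMod.natCast_eq_zero_iff, Nat.prime_dvd_prime_iff_eq Fact.out hq]
    obtain ⟨φ, hφ⟩ := exists_not_isSumOfIdempotents_three (V := V)
      (ne_zero 2 Nat.prime_two hp.1) (ne_zero 3 Nat.prime_three hp.2)
    exact hφ (h φ)
  · exact fun hp => isSumOfIdempotents_three_of_forall_two (forall_zmod_isSumOfIdempotents_two hp)

theorem forall_matrix_iff_forall_end {ι R S : Type*} [Fintype ι] [CommRing R] [CommRing S]
    (e : R ≃+* S) {k : ℕ} :
    (∀ M : Matrix ι ι R, IsSumOfIdempotents k M) ↔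
      ∀ φ : End S (ι → S), IsSumOfIdempotents k φ := by
  classical
  exact IsSumOfIdempotents.forall_congr (e.mapMatrix.trans Matrix.toLinAlgEquiv'.toRingEquiv)

end FiniteDimensional

/-- For an integral domain `R` and `n ≥ 1`, every matrix in `M_n(R)` is a sum of three
idempotent matrices if and only if `R ≅ ℤ/2` or `R ≅ ℤ/3`. -/
theorem matrix_sum_three_idempotents_domain_iff (R : Type*) [CommRing R] [IsDomain R]
    (n : ℕ) (hn : 1 ≤ n) :
    (∀ A : Matrix (Fin n) (Fin n) R,
      ∃ E₁ E₂ E₃ : Matrix (Fin n) (Fin n) R,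
        E₁ * E₁ = E₁ ∧ E₂ * E₂ = E₂ ∧ E₃ * E₃ = E₃ ∧ A = E₁ + E₂ + E₃) ↔
    (Nonempty (R ≃+* ZMod 2) ∨ Nonempty (R ≃+* ZMod 3)) := by
  have : Nonempty (Fin n) := Fin.pos_iff_nonempty.1 hn
  trans ∀ A : Matrix (Fin n) (Fin n) R, IsSumOfIdempotents 3 A
  · exact forall_congr' fun A => IsSumOfIdempotents.three_iff.symm
  refine ⟨fun h => ?_, ?_⟩
  · obtain ⟨p, hp, ⟨e⟩⟩ :=
      exists_prime_ringEquiv_zmod_of_natCast_surjective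
        (natCast_surjective_of_forall_isSumOfIdempotents h)
    have : Fact p.Prime := ⟨hp⟩
    rcases forall_end_zmod_isSumOfIdempotents_three_iff.1 ((forall_matrix_iff_forall_end e).1 h)
      with rfl | rfl
    · exact .inl ⟨e⟩
    · exact .inr ⟨e⟩
  · rintro (⟨⟨e⟩⟩ | ⟨⟨e⟩⟩) <;>
      exact (forall_matrix_iff_forall_end e).2
        (forall_end_zmod_isSumOfIdempotents_three_iff.2 (by decide))
end

section
/- Let R be a commutative indecomposable ring and n ≥ 1, and suppose that every matrix in M_n(R) is a sum of three idempotent matrices. Then R is isomorphic to Z_m where m = 2, 3, or 4. -/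
/-!
Traces of idempotent matrices over an indecomposable ring are natural numbers: for `E` idempotent,
`p(X) = det(1 + (X - 1) E)` satisfies `p(X) p(Y) = p(XY)`, so its coefficients are orthogonal
idempotents, hence `p = X ^ k` and `tr E = p'(1) = k`. Decomposing `r e₁₁` shows that every `r : R`
is a natural number, so `R` is determined by its characteristic.

If `5` is invertible, then the summands in `-1 = E + P + Q` commute, and this forces `12 = 0`; as
`4` is then idempotent, `3 = 0` or `4 = 0`.

If `5` is not invertible, pass to a residue field of characteristic `5`, acting on `V = Kⁿ`.
For idempotents `P`, `Q` put `T = P + Q - 1` and `D = P - Q`; then `T D = -D T` and `D² = 1 - T²`,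
so taking determinants on an eigenspace of `T²` with eigenvalue `c ≠ 0, 1` shows that this space is
even-dimensional. If `-1 = E + P + Q`, then `T² = -1`, so `dim V` is even. If minus a reflection is
`E + P + Q`, then `T² + 1` has rank at most `2`, it is nonzero, and its kernel is even-dimensional,
so for `dim V` even its range is a plane. On this plane minus the reflection has trace `0`, whereas
the ranks of the three idempotents must add up to `2`, `3` or `4`.
-/

open Module Polynomial

/-- The property of being a sum of three idempotents, for an element of a ring. -/
def IsSumOfThreeIdempotents {S : Type*} [Mul S] [Add S] (a : S) : Prop :=
  ∃ e₁ e₂ e₃ : S, IsIdempotentElem e₁ ∧ IsIdempotentElem e₂ ∧ IsIdempotentElem e₃ ∧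
    a = e₁ + e₂ + e₃

namespace IsSumOfThreeIdempotents

variable {S T F : Type*} [NonUnitalNonAssocSemiring S] [NonUnitalNonAssocSemiring T]
  [FunLike F S T] [NonUnitalRingHomClass F S T]

theorem map {a : S} (ha : IsSumOfThreeIdempotents a) (f : F) : IsSumOfThreeIdempotents (f a) := by
  obtain ⟨e₁, e₂, e₃, h₁, h₂, h₃, rfl⟩ := ha
  exact ⟨f e₁, f e₂, f e₃, h₁.map f, h₂.map f, h₃.map f, by simp only [map_add]⟩

theorem forall_of_surjective (h : ∀ a : S, IsSumOfThreeIdempotents a) {f : F}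
    (hf : Function.Surjective f) (b : T) : IsSumOfThreeIdempotents b := by
  obtain ⟨a, rfl⟩ := hf b
  exact (h a).map f

end IsSumOfThreeIdempotents

section IdempotentTrace

variable {R : Type*} [CommRing R]

-- With `C X` and `X` standing for `X` and `Y`, compare the coefficients of `Yʲ` in
-- `p(X) p(Y) = p(XY)`.
theorem mul_C_coeff_eq_monomial {p : R[X]}
    (hp : aeval (C X : R[X][X]) p * aeval (X : R[X][X]) p = aeval (C X * X : R[X][X]) p) (j : ℕ) :
    p * C (p.coeff j) = monomial j (p.coeff j) := by
  have hCX : aeval (C X : R[X][X]) p = C p := by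
    rw [← Polynomial.algebraMap_eq, aeval_algebraMap_apply, aeval_X_left_apply]
  have hX : aeval (X : R[X][X]) p = p.map C := aeval_X_left_eq_map p
  have hcoeff : (aeval (C X * X : R[X][X]) p).coeff j = monomial j (p.coeff j) := by
    simp only [aeval_eq_sum_range, finsetSum_coeff, mul_pow, ← C_pow, coeff_smul, coeff_C_mul_X_pow]
    by_cases hj : j ∈ Finset.range (p.natDegree + 1)
    · simp [hj, smul_X_eq_monomial]
    · have hpj : p.coeff j = 0 := coeff_eq_zero_of_natDegree_lt (by simpa using hj)
      simp [hj, hpj]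
  rw [← hcoeff, ← hp, hCX, hX, coeff_C_mul, coeff_map]

theorem exists_eq_X_pow_of_aeval_mul {p : R[X]}
    (hind : ∀ e : R, IsIdempotentElem e → e = 0 ∨ e = 1)
    (hp : aeval (C X : R[X][X]) p * aeval (X : R[X][X]) p = aeval (C X * X : R[X][X]) p)
    (hp0 : p ≠ 0) : ∃ k, p = X ^ k := by
  obtain ⟨k, hk⟩ : ∃ k, p.coeff k ≠ 0 := by
    contrapose! hp0
    exact Polynomial.ext hp0
  have hpk := mul_C_coeff_eq_monomial hp k
  have hk_idem : IsIdempotentElem (p.coeff k) := by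
    simpa [IsIdempotentElem] using congr(coeff $hpk k)
  have hk_one : p.coeff k = 1 := (hind _ hk_idem).resolve_left hk
  exact ⟨k, by simpa [hk_one, X_pow_eq_monomial] using hpk⟩

variable {ι : Type*} [Fintype ι]

/-- The polynomial `det (1 - E + X E)`, written `det (1 + (X - 1) E)`. When `E` is an idempotent
matrix of constant rank `k`, it equals `X ^ k`. -/
noncomputable def rankPolynomial [DecidableEq ι] (E : Matrix ι ι R) : R[X] :=
  (1 + (X - 1 : R[X]) • E.map C).det

theorem aeval_rankPolynomial [DecidableEq ι] {A : Type*} [CommRing A] [Algebra R A]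
    (E : Matrix ι ι R) (a : A) :
    aeval a (rankPolynomial E) = (1 + (a - 1) • E.map (algebraMap R A)).det := by
  rw [rankPolynomial, AlgHom.map_det]
  congr 1
  ext i j
  simp [Matrix.one_apply, apply_ite]

theorem aeval_rankPolynomial_mul [DecidableEq ι] {A : Type*} [CommRing A] [Algebra R A]
    {E : Matrix ι ι R} (hE : IsIdempotentElem E) (a b : A) :
    aeval a (rankPolynomial E) * aeval b (rankPolynomial E) = aeval (a * b) (rankPolynomial E) := by
  have hE' : E.map (algebraMap R A) * E.map (algebraMap R A) = E.map (algebraMap R A) := by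
    rw [← Matrix.map_mul, hE.eq]
  simp only [aeval_rankPolynomial, ← Matrix.det_mul, add_mul, mul_add, one_mul, mul_one,
    Matrix.smul_mul, Matrix.mul_smul, hE']
  rw [add_assoc, smul_smul, ← add_smul, ← add_smul]
  congr 3
  ring

theorem rankPolynomial_ne_zero [DecidableEq ι] [Nontrivial R] (E : Matrix ι ι R) :
    rankPolynomial E ≠ 0 := by
  intro h
  simpa [h] using aeval_rankPolynomial E (1 : R)

theorem trace_eq_of_rankPolynomial_eq_X_pow [DecidableEq ι] {E : Matrix ι ι R} {k : ℕ}
    (h : rankPolynomial E = X ^ k) : E.trace = k := by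
  have hdet : (1 + (X : R[X]) • E.map C).det = (1 + X) ^ k := by
    have := aeval_rankPolynomial E (1 + X : R[X])
    rw [h, map_pow, aeval_X, add_sub_cancel_left] at this
    exact this.symm
  rw [← Matrix.coeff_det_one_add_X_smul_one, hdet, coeff_one_add_X_pow, Nat.choose_one_right]

theorem exists_trace_eq_natCast_of_isIdempotentElem_s11 [Nontrivial R]
    (hind : ∀ e : R, IsIdempotentElem e → e = 0 ∨ e = 1) {E : Matrix ι ι R}
    (hE : IsIdempotentElem E) : ∃ k : ℕ, E.trace = k := by
  classical
  obtain ⟨k, hk⟩ := exists_eq_X_pow_of_aeval_mul hind (aeval_rankPolynomial_mul hE _ _)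
    (rankPolynomial_ne_zero E)
  exact ⟨k, trace_eq_of_rankPolynomial_eq_X_pow hk⟩

theorem natCast_surjective_of_forall_isSumOfThreeIdempotents [Nontrivial R] [Nonempty ι]
    (hind : ∀ e : R, IsIdempotentElem e → e = 0 ∨ e = 1)
    (h : ∀ A : Matrix ι ι R, IsSumOfThreeIdempotents A) :
    Function.Surjective (Nat.cast : ℕ → R) := by
  classical
  intro r
  let i : ι := Classical.arbitrary ι
  obtain ⟨E₁, E₂, E₃, h₁, h₂, h₃, hA⟩ := h (Matrix.single i i r)
  obtain ⟨k₁, hk₁⟩ := exists_trace_eq_natCast_of_isIdempotentElem_s11 hind h₁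
  obtain ⟨k₂, hk₂⟩ := exists_trace_eq_natCast_of_isIdempotentElem_s11 hind h₂
  obtain ⟨k₃, hk₃⟩ := exists_trace_eq_natCast_of_isIdempotentElem_s11 hind h₃
  refine ⟨k₁ + k₂ + k₃, ?_⟩
  rw [← Matrix.trace_single_eq_same i r, hA, Matrix.trace_add, Matrix.trace_add, hk₁, hk₂, hk₃]
  push_cast
  rfl

end IdempotentTrace

section IdempotentIdentities

variable {S : Type*} [Ring S] {E P Q : S}

theorem commute_of_neg_one_eq_add (h5 : IsUnit (5 : S)) (hE : IsIdempotentElem E)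
    (hP : IsIdempotentElem P) (hQ : IsIdempotentElem Q) (h : -1 = E + P + Q) : Commute E P := by
  obtain rfl : Q = -1 - E - P := by rw [h]; abel
  refine h5.mul_left_cancel ?_
  linear_combination (norm := noncomm_ring)
    -(P * hQ.eq) + hQ.eq * P + P * hE.eq - hE.eq * P + hP.eq * E - E * hP.eq

theorem twelve_eq_zero_of_isSumOfThreeIdempotents_neg_one (h5 : IsUnit (5 : S))
    (h : IsSumOfThreeIdempotents (-1 : S)) : (12 : S) = 0 := by
  obtain ⟨E, P, Q, hE, hP, hQ, h⟩ := h
  have hEP : E * P = P * E := commute_of_neg_one_eq_add h5 hE hP hQ h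
  obtain rfl : Q = -1 - E - P := by rw [h]; abel
  have hsum : 2 + 4 * E + 4 * P + 2 * (E * P) = 0 := by
    linear_combination (norm := noncomm_ring) hQ.eq - hE.eq - hP.eq + hEP
    norm_num
  have hE_six : 6 * E + 6 * (E * P) = 0 := by
    linear_combination (norm := noncomm_ring) E * hsum - 4 * hE.eq - 2 * hE.eq * P
  have hP_six : 6 * P + 6 * (E * P) = 0 := by
    linear_combination (norm := noncomm_ring) hsum * P - 4 * hP.eq - 2 * E * hP.eq
  have hEP_twelve : 12 * (E * P) = 0 := by
    linear_combination (norm := noncomm_ring) hE_six * P - 6 * E * hP.eq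
  linear_combination (norm := noncomm_ring) 6 * hsum - 4 * hE_six - 4 * hP_six + 3 * hEP_twelve
  norm_num

theorem anticommute_add_sub_one_sub (hP : IsIdempotentElem P) (hQ : IsIdempotentElem Q) :
    (P + Q - 1) * (P - Q) = -((P - Q) * (P + Q - 1)) := by
  linear_combination (norm := noncomm_ring) 2 * hP.eq - 2 * hQ.eq

theorem sub_mul_sub_eq_one_sub (hP : IsIdempotentElem P) (hQ : IsIdempotentElem Q) :
    (P - Q) * (P - Q) = 1 - (P + Q - 1) * (P + Q - 1) := by
  linear_combination (norm := noncomm_ring) 2 * hP.eq + 2 * hQ.eq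

theorem commute_sq_add_sub_one_left (hP : IsIdempotentElem P) (hQ : IsIdempotentElem Q) :
    Commute ((P + Q - 1) * (P + Q - 1)) P := by
  rw [commute_iff_eq]
  linear_combination (norm := noncomm_ring) Q * hP.eq + hQ.eq * P - hP.eq * Q - P * hQ.eq

theorem commute_sq_add_sub_one_right (hP : IsIdempotentElem P) (hQ : IsIdempotentElem Q) :
    Commute ((P + Q - 1) * (P + Q - 1)) Q := by
  rw [add_comm P Q]
  exact commute_sq_add_sub_one_left hQ hP

theorem sq_add_sub_one_eq_neg_one (h5 : (5 : S) = 0) (hE : IsIdempotentElem E)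
    (h : -1 = E + P + Q) : (P + Q - 1) * (P + Q - 1) = -1 := by
  obtain rfl : E = -1 - P - Q := by rw [h]; abel
  linear_combination (norm := noncomm_ring) hE.eq - h5 * P - h5 * Q

theorem sq_add_sub_one_add_one_eq {M : S} (h5 : (5 : S) = 0) (hE : IsIdempotentElem E)
    (hM : M * M = 2 * M) (h : M - 1 = E + P + Q) :
    (P + Q - 1) * (P + Q - 1) + 1 = -(2 * M + M * E + E * M) := by
  obtain rfl : Q = M - 1 - E - P := by rw [h]; abel
  linear_combination (norm := noncomm_ring) hM + hE.eq + h5 * E + h5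
  norm_num

end IdempotentIdentities

section InvariantSubmodules

variable {R M : Type*} [Semiring R] [AddCommMonoid M] [Module R M]

theorem mapsTo_range_of_commute {f g : End R M} (h : Commute f g) :
    ∀ v ∈ LinearMap.range f, g v ∈ LinearMap.range f := by
  rintro _ ⟨v, rfl⟩
  exact ⟨g v, congr($h.eq v)⟩

theorem isIdempotentElem_restrict {E : End R M} (hE : IsIdempotentElem E) {U : Submodule R M}
    (hU : ∀ v ∈ U, E v ∈ U) : IsIdempotentElem (E.restrict hU) := by
  ext v
  exact congr($hE.eq v)

end InvariantSubmodules

section PreReflection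

variable {R M : Type*} [CommRing R] [AddCommGroup M] [Module R M]

theorem trace_preReflection [Module.Free R M] [Module.Finite R M] (x : M) (f : Dual R M) :
    LinearMap.trace R M (preReflection x f) = finrank R M - f x := by
  rw [preReflection, map_sub, LinearMap.trace_id, LinearMap.trace_smulRight]

theorem isSumOfThreeIdempotents_neg_preReflection_submodule {x : M} {f : Dual R M}
    {E P Q : End R M} (hE : IsIdempotentElem E) (hP : IsIdempotentElem P)
    (hQ : IsIdempotentElem Q) (h : -preReflection x f = E + P + Q) {U : Submodule R M}
    (hxU : x ∈ U) (hPU : ∀ v ∈ U, P v ∈ U) (hQU : ∀ v ∈ U, Q v ∈ U) :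
    IsSumOfThreeIdempotents (-preReflection (⟨x, hxU⟩ : U) (f ∘ₗ U.subtype)) := by
  have hEU : ∀ v ∈ U, E v ∈ U := by
    intro v hv
    have hEv : E v = f v • x - v - P v - Q v := by
      have := congr($h v)
      simp only [LinearMap.neg_apply, preReflection_apply, LinearMap.add_apply] at this
      linear_combination (norm := module) -this
    rw [hEv]
    exact U.sub_mem (U.sub_mem (U.sub_mem (U.smul_mem _ hxU) hv) (hPU v hv)) (hQU v hv)
  refine ⟨E.restrict hEU, P.restrict hPU, Q.restrict hQU, isIdempotentElem_restrict hE hEU,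
    isIdempotentElem_restrict hP hPU, isIdempotentElem_restrict hQ hQU, ?_⟩
  ext v
  simpa [preReflection_apply] using congr($h v)

end PreReflection

section EvenDimension

variable {K V : Type*} [Field K] [AddCommGroup V] [Module K V]

theorem even_finrank_of_anticommute (h2 : (2 : K) ≠ 0) {T D : End K V} {a b : K} (ha : a ≠ 0)
    (hb : b ≠ 0) (hT : T * T = a • 1) (hD : D * D = b • 1) (hTD : T * D = -(D * T)) :
    Even (finrank K V) := by
  by_contra hodd
  rw [Nat.not_even_iff_odd] at hodd
  have hdetT : LinearMap.det T ≠ 0 := by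
    refine left_ne_zero_of_mul (b := LinearMap.det T) ?_
    rw [← map_mul, hT, LinearMap.det_smul]
    simp [ha]
  have hdetD : LinearMap.det D ≠ 0 := by
    refine left_ne_zero_of_mul (b := LinearMap.det D) ?_
    rw [← map_mul, hD, LinearMap.det_smul]
    simp [hb]
  have hdet : LinearMap.det T * LinearMap.det D = -(LinearMap.det D * LinearMap.det T) := by
    rw [← map_mul, hTD, ← neg_one_smul K (D * T), LinearMap.det_smul, hodd.neg_one_pow]
    simp
  exact mul_ne_zero h2 (mul_ne_zero hdetT hdetD) (by linear_combination hdet)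

theorem even_finrank_of_sq_add_sub_one_eq (h2 : (2 : K) ≠ 0) {P Q : End K V}
    (hP : IsIdempotentElem P) (hQ : IsIdempotentElem Q) {c : K} (h0 : c ≠ 0) (h1 : c ≠ 1)
    (hc : (P + Q - 1) * (P + Q - 1) = c • 1) : Even (finrank K V) := by
  refine even_finrank_of_anticommute h2 h0 (sub_ne_zero_of_ne h1.symm) hc ?_
    (anticommute_add_sub_one_sub hP hQ)
  rw [sub_mul_sub_eq_one_sub hP hQ, hc, sub_smul, one_smul]

theorem even_finrank_eigenspace_sq_add_sub_one (h2 : (2 : K) ≠ 0) {P Q : End K V}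
    (hP : IsIdempotentElem P) (hQ : IsIdempotentElem Q) {c : K} (h0 : c ≠ 0) (h1 : c ≠ 1) :
    Even (finrank K (End.eigenspace ((P + Q - 1) * (P + Q - 1)) c)) := by
  have hPU := End.mapsTo_genEigenspace_of_comm (commute_sq_add_sub_one_left hP hQ) c 1
  have hQU := End.mapsTo_genEigenspace_of_comm (commute_sq_add_sub_one_right hP hQ) c 1
  refine even_finrank_of_sq_add_sub_one_eq h2 (isIdempotentElem_restrict hP hPU)
    (isIdempotentElem_restrict hQ hQU) h0 h1 ?_
  ext v
  exact End.mem_eigenspace_iff.1 v.2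

end EvenDimension

section Subspaces

variable {K V : Type*} [DivisionRing K] [AddCommGroup V] [Module K V]

theorem finrank_span_pair_le (x y : V) : finrank K (Submodule.span K {x, y}) ≤ 2 := by
  classical
  have h := finrank_span_finset_le_card (R := K) ({x, y} : Finset V)
  rw [Set.finrank, Finset.coe_pair] at h
  exact h.trans Finset.card_le_two

theorem finrank_le_of_isUnit_add [FiniteDimensional K V] {f g h : End K V}
    (hu : IsUnit (f + g + h)) :
    finrank K V ≤ finrank K (LinearMap.range f) + finrank K (LinearMap.range g) +
      finrank K (LinearMap.range h) := by
  have hrange :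
      (⊤ : Submodule K V) ≤ LinearMap.range f ⊔ LinearMap.range g ⊔ LinearMap.range h := by
    rw [← (LinearMap.range_eq_top (f := f + g + h)).2 ((End.isUnit_iff _).1 hu).surjective]
    exact (LinearMap.range_add_le _ _).trans (sup_le_sup_right (LinearMap.range_add_le _ _) _)
  calc finrank K V = finrank K (⊤ : Submodule K V) := (finrank_top K V).symm
    _ ≤ _ := Submodule.finrank_mono hrange
    _ ≤ _ := Submodule.finrank_add_le_finrank_add_finrank _ _
    _ ≤ _ := by gcongr; exact Submodule.finrank_add_le_finrank_add_finrank _ _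

end Subspaces

section TraceBound

variable {K V : Type*} [Field K] [AddCommGroup V] [Module K V] [FiniteDimensional K V]

theorem trace_eq_finrank_range {E : End K V} (hE : IsIdempotentElem E) :
    LinearMap.trace K V E = finrank K (LinearMap.range E) :=
  (LinearMap.IsIdempotentElem.isProj_range E hE).trace

theorem finrank_range_add_finrank_range_one_sub {E : End K V} (hE : IsIdempotentElem E) :
    finrank K (LinearMap.range E) + finrank K (LinearMap.range (1 - E)) = finrank K V := by
  rw [← LinearMap.IsIdempotentElem.ker_eq_range_one_sub hE, LinearMap.finrank_range_add_finrank_ker]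

-- The upper bound is the lower bound for `3 - A = (1 - E) + (1 - P) + (1 - Q)`.
theorem IsSumOfThreeIdempotents.exists_trace_eq_natCast_le {A : End K V}
    (hA : IsSumOfThreeIdempotents A) (hu : IsUnit A) (hu' : IsUnit (3 - A)) :
    ∃ s : ℕ, LinearMap.trace K V A = s ∧ finrank K V ≤ s ∧ s ≤ 2 * finrank K V := by
  obtain ⟨E, P, Q, hE, hP, hQ, rfl⟩ := hA
  have hcompl : 3 - (E + P + Q) = (1 - E) + (1 - P) + (1 - Q) := by
    rw [show (3 : End K V) = 1 + 1 + 1 by norm_num]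
    abel
  have hle := finrank_le_of_isUnit_add hu
  have hle' := finrank_le_of_isUnit_add (hcompl ▸ hu')
  have hE' := finrank_range_add_finrank_range_one_sub hE
  have hP' := finrank_range_add_finrank_range_one_sub hP
  have hQ' := finrank_range_add_finrank_range_one_sub hQ
  refine ⟨_, ?_, hle, by omega⟩
  simp only [map_add, trace_eq_finrank_range, hE, hP, hQ, Nat.cast_add]

end TraceBound

section CharFive

variable {K V : Type*} [Field K] [CharP K 5] [AddCommGroup V] [Module K V]

theorem five_eq_zero_end : (5 : End K V) = 0 := by
  have h5 : (5 : K) = 0 := CharP.ofNat_eq_zero K 5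
  rw [← map_ofNat (algebraMap K (End K V)) 5, h5, map_zero]

theorem two_ne_zero_of_charP_five (K : Type*) [Field K] [CharP K 5] : (2 : K) ≠ 0 := by
  exact_mod_cast (CharP.cast_eq_zero_iff K 5 2).not.2 (by norm_num)

theorem neg_one_ne_one_of_charP_five (K : Type*) [Field K] [CharP K 5] : (-1 : K) ≠ 1 := by
  intro h
  exact two_ne_zero_of_charP_five K (by linear_combination -h)

theorem even_finrank_of_isSumOfThreeIdempotents_neg_one
    (h : IsSumOfThreeIdempotents (-1 : End K V)) : Even (finrank K V) := by
  obtain ⟨E, P, Q, hE, hP, hQ, h⟩ := h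
  refine even_finrank_of_sq_add_sub_one_eq (two_ne_zero_of_charP_five K) hP hQ (c := -1) (by simp)
    (neg_one_ne_one_of_charP_five K) ?_
  rw [sq_add_sub_one_eq_neg_one five_eq_zero_end hE h, neg_one_smul]

theorem trace_ne_zero_of_isSumOfThreeIdempotents (hd : finrank K V = 2) {A : End K V}
    (hA : A * A = 1) (h : IsSumOfThreeIdempotents A) : LinearMap.trace K V A ≠ 0 := by
  have : FiniteDimensional K V := FiniteDimensional.of_finrank_eq_succ hd
  have hinv : (3 - A) * (6 + 2 * A) = 1 := by
    linear_combination (norm := noncomm_ring) -2 * hA + 3 * five_eq_zero_end (K := K) (V := V)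
    norm_num
  have hu' : IsUnit (3 - A) := .of_mul_eq_one _ hinv
  obtain ⟨s, hs, hle, hle'⟩ := h.exists_trace_eq_natCast_le (.of_mul_eq_one _ hA) hu'
  rw [hs, Ne, CharP.cast_eq_zero_iff K 5]
  omega

theorem not_isSumOfThreeIdempotents_neg_preReflection_of_finrank_eq_two (hd : finrank K V = 2)
    {x : V} {f : Dual K V} (hx : f x = 2) :
    ¬ IsSumOfThreeIdempotents (-preReflection x f) := by
  intro h
  have : FiniteDimensional K V := FiniteDimensional.of_finrank_eq_succ hd
  refine trace_ne_zero_of_isSumOfThreeIdempotents hd ?_ h ?_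
  · ext v
    simp [involutive_preReflection hx v]
  · rw [map_neg, trace_preReflection, hd, hx, Nat.cast_ofNat, sub_self, neg_zero]

section NegReflection

variable {x : V} {f : Dual K V} {E P Q : End K V}

theorem sq_add_sub_one_add_one_apply (hx : f x = 2) (hE : IsIdempotentElem E)
    (h : -preReflection x f = E + P + Q) (v : V) :
    ((P + Q - 1) * (P + Q - 1) + 1) v = -((2 * f v + f (E v)) • x + f v • E x) := by
  have hM : f.smulRight x * f.smulRight x = 2 * f.smulRight x := by
    ext w
    simp [hx, two_mul, two_smul]
  have hsum : f.smulRight x - 1 = E + P + Q := by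
    rw [← h, preReflection, neg_sub, End.one_eq_id]
  rw [sq_add_sub_one_add_one_eq five_eq_zero_end hE hM hsum, two_mul]
  simp only [LinearMap.neg_apply, LinearMap.add_apply, End.mul_apply, LinearMap.smulRight_apply,
    map_smul]
  module

theorem range_sq_add_sub_one_add_one_le (hx : f x = 2) (hE : IsIdempotentElem E)
    (h : -preReflection x f = E + P + Q) :
    LinearMap.range ((P + Q - 1) * (P + Q - 1) + 1) ≤ Submodule.span K {x, E x} := by
  rintro _ ⟨v, rfl⟩
  rw [sq_add_sub_one_add_one_apply hx hE h]
  exact Submodule.neg_mem _ (Submodule.mem_span_pair.2 ⟨_, _, rfl⟩)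

theorem sq_add_sub_one_add_one_apply_ne_zero (hx : f x = 2) (hE : IsIdempotentElem E)
    (h : -preReflection x f = E + P + Q) : ((P + Q - 1) * (P + Q - 1) + 1) x ≠ 0 := by
  intro h0
  have h2 : (2 : K) ≠ 0 := two_ne_zero_of_charP_five K
  rw [sq_add_sub_one_add_one_apply hx hE h, neg_eq_zero, hx] at h0
  have hfE : f (E x) = -2 := by
    have hf := congr(f $h0)
    simp only [map_add, map_smul, hx, smul_eq_mul, map_zero] at hf
    refine mul_left_cancel₀ (mul_ne_zero h2 h2) ?_
    linear_combination hf
  have hEx : E x = -x := by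
    refine smul_right_injective V h2 ?_
    rw [hfE] at h0
    linear_combination (norm := module) h0
  have hxx : (2 : K) • x = 0 := by
    have := congr($hE.eq x)
    rw [End.mul_apply, hEx, map_neg, hEx] at this
    linear_combination (norm := module) this
  have hx0 : x = 0 := (smul_eq_zero.1 hxx).resolve_left h2
  exact h2 (by rw [← hx, hx0, map_zero])

theorem finrank_range_sq_add_sub_one_add_one [FiniteDimensional K V] (hd : Even (finrank K V))
    (hx : f x = 2) (hE : IsIdempotentElem E) (hP : IsIdempotentElem P) (hQ : IsIdempotentElem Q)
    (h : -preReflection x f = E + P + Q) :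
    finrank K (LinearMap.range ((P + Q - 1) * (P + Q - 1) + 1)) = 2 := by
  set F : End K V := (P + Q - 1) * (P + Q - 1) + 1
  have hker : Even (finrank K (LinearMap.ker F)) := by
    have hF : LinearMap.ker F = End.eigenspace ((P + Q - 1) * (P + Q - 1)) (-1) := by
      rw [End.eigenspace_def, neg_one_smul, sub_neg_eq_add]
    rw [hF]
    exact even_finrank_eigenspace_sq_add_sub_one (two_ne_zero_of_charP_five K) hP hQ (by simp)
      (neg_one_ne_one_of_charP_five K)
  have heven : Even (finrank K (LinearMap.range F)) := by
    rw [← F.finrank_range_add_finrank_ker, Nat.even_add] at hd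
    exact hd.2 hker
  have hpos : finrank K (LinearMap.range F) ≠ 0 := by
    intro h0
    rw [Submodule.finrank_eq_zero, LinearMap.range_eq_bot] at h0
    exact sq_add_sub_one_add_one_apply_ne_zero hx hE h congr($h0 x)
  have hle : finrank K (LinearMap.range F) ≤ 2 :=
    (Submodule.finrank_mono (range_sq_add_sub_one_add_one_le hx hE h)).trans
      (finrank_span_pair_le x (E x))
  obtain ⟨k, hk⟩ := heven
  omega

theorem not_isSumOfThreeIdempotents_neg_preReflection [FiniteDimensional K V]
    (hd : Even (finrank K V)) (hx : f x = 2) :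
    ¬ IsSumOfThreeIdempotents (-preReflection x f) := by
  rintro ⟨E, P, Q, hE, hP, hQ, h⟩
  set F : End K V := (P + Q - 1) * (P + Q - 1) + 1
  have hrank : finrank K (LinearMap.range F) = 2 :=
    finrank_range_sq_add_sub_one_add_one hd hx hE hP hQ h
  have hspan : LinearMap.range F = Submodule.span K {x, E x} :=
    Submodule.eq_of_le_of_finrank_le (range_sq_add_sub_one_add_one_le hx hE h)
      (hrank ▸ finrank_span_pair_le x (E x))
  have hxF : x ∈ LinearMap.range F := hspan ▸ Submodule.subset_span (by simp)
  have hPF : Commute F P := (commute_sq_add_sub_one_left hP hQ).add_left (.one_left P)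
  have hQF : Commute F Q := (commute_sq_add_sub_one_right hP hQ).add_left (.one_left Q)
  exact not_isSumOfThreeIdempotents_neg_preReflection_of_finrank_eq_two hrank hx
    (isSumOfThreeIdempotents_neg_preReflection_submodule hE hP hQ h hxF
      (mapsTo_range_of_commute hPF) (mapsTo_range_of_commute hQF))

end NegReflection

variable (K V) in
theorem exists_end_not_isSumOfThreeIdempotents [FiniteDimensional K V] [Nontrivial V] :
    ∃ A : End K V, ¬ IsSumOfThreeIdempotents A := by
  by_cases hd : Even (finrank K V)
  · obtain ⟨x, hx⟩ := exists_ne (0 : V)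
    obtain ⟨f, hf⟩ := Projective.exists_dual_eq_one K hx
    exact ⟨_, not_isSumOfThreeIdempotents_neg_preReflection (f := (2 : K) • f) (x := x) hd
      (by simp [hf])⟩
  · exact ⟨-1, mt even_finrank_of_isSumOfThreeIdempotents_neg_one hd⟩

end CharFive

section MatrixRing

variable {ι : Type*} [Fintype ι]

theorem mapMatrix_surjective [DecidableEq ι] {R S : Type*} [NonAssocSemiring R]
    [NonAssocSemiring S] {f : R →+* S} (hf : Function.Surjective f) :
    Function.Surjective (f.mapMatrix : Matrix ι ι R →+* Matrix ι ι S) := by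
  intro B
  refine ⟨B.map (Function.surjInv hf), ?_⟩
  ext i j
  exact Function.surjInv_eq hf (B i j)

variable {R : Type*} [CommRing R] [Nonempty ι]

theorem isUnit_five_of_forall_isSumOfThreeIdempotents
    (h : ∀ A : Matrix ι ι R, IsSumOfThreeIdempotents A) : IsUnit (5 : R) := by
  classical
  by_contra h5
  obtain ⟨I, hI, h5I⟩ := exists_max_ideal_of_mem_nonunits h5
  let : Field (R ⧸ I) := Ideal.Quotient.field I
  have : CharP (R ⧸ I) 5 := by
    rw [CharP.charP_iff_prime_eq_zero Nat.prime_five]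
    exact_mod_cast Ideal.Quotient.eq_zero_iff_mem.2 h5I
  obtain ⟨A, hA⟩ := exists_end_not_isSumOfThreeIdempotents (R ⧸ I) (ι → R ⧸ I)
  have hmat := mapMatrix_surjective (ι := ι) (Ideal.Quotient.mk_surjective (I := I))
  have hend : Function.Surjective (Matrix.toLinAlgEquiv' : Matrix ι ι (R ⧸ I) ≃ₐ[R ⧸ I] _) :=
    AlgEquiv.surjective _
  exact hA (.forall_of_surjective (.forall_of_surjective h hmat) hend A)

theorem twelve_eq_zero_of_forall_isSumOfThreeIdempotents
    (h : ∀ A : Matrix ι ι R, IsSumOfThreeIdempotents A) : (12 : R) = 0 := by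
  classical
  have h5 : IsUnit (5 : Matrix ι ι R) := by
    rw [← map_ofNat (Matrix.scalar ι) 5]
    exact (isUnit_five_of_forall_isSumOfThreeIdempotents h).map (Matrix.scalar ι)
  have h12 := twelve_eq_zero_of_isSumOfThreeIdempotents_neg_one h5 (h (-1))
  rw [← map_ofNat (Matrix.scalar ι) 12, ← map_zero (Matrix.scalar ι)] at h12
  exact Matrix.scalar_inj.1 h12

end MatrixRing

theorem ringChar_of_twelve_eq_zero {R : Type*} [CommRing R] [Nontrivial R]
    (hind : ∀ e : R, IsIdempotentElem e → e = 0 ∨ e = 1) (h12 : (12 : R) = 0) :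
    ringChar R = 2 ∨ ringChar R = 3 ∨ ringChar R = 4 := by
  have hne : ringChar R ≠ 1 := CharP.ringChar_ne_one
  have h4_idem : IsIdempotentElem (4 : R) := by
    rw [IsIdempotentElem]
    linear_combination h12
  rcases hind 4 h4_idem with h4 | h4
  · have hdvd : ringChar R ∣ 4 := ringChar.dvd (by exact_mod_cast h4)
    have hle := Nat.le_of_dvd (by norm_num) hdvd
    interval_cases ringChar R <;> simp_all
  · have hdvd : ringChar R ∣ 3 := ringChar.dvd (by push_cast; linear_combination h4)
    have hle := Nat.le_of_dvd (by norm_num) hdvd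
    interval_cases ringChar R <;> simp_all

theorem nonempty_ringEquiv_zmod_ringChar {R : Type*} [Ring R]
    (h : Function.Surjective (Nat.cast : ℕ → R)) : Nonempty (R ≃+* ZMod (ringChar R)) := by
  have hsurj : Function.Surjective (ZMod.castHom dvd_rfl R : ZMod (ringChar R) →+* R) := by
    intro r
    obtain ⟨k, rfl⟩ := h r
    exact ⟨k, map_natCast _ k⟩
  exact ⟨(RingEquiv.ofBijective _ ⟨ZMod.castHom_injective R, hsurj⟩).symm⟩

/-- If `R` is a commutative indecomposable ring (its only idempotents are `0` and `1`),
`n ≥ 1`, and every matrix in `M_n(R)` is a sum of three idempotents, then `R ≅ ℤ/m`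
with `m = 2`, `3` or `4`. -/
theorem indecomposable_comm_ring_of_sum_three_idempotents (R : Type*) [CommRing R]
    [Nontrivial R] (hind : ∀ e : R, e * e = e → e = 0 ∨ e = 1) (n : ℕ) (hn : 1 ≤ n)
    (h : ∀ A : Matrix (Fin n) (Fin n) R,
      ∃ E₁ E₂ E₃ : Matrix (Fin n) (Fin n) R,
        E₁ * E₁ = E₁ ∧ E₂ * E₂ = E₂ ∧ E₃ * E₃ = E₃ ∧ A = E₁ + E₂ + E₃) :
    ∃ m : ℕ, (m = 2 ∨ m = 3 ∨ m = 4) ∧ Nonempty (R ≃+* ZMod m) := by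
  have : Nonempty (Fin n) := ⟨⟨0, hn⟩⟩
  exact ⟨ringChar R,
    ringChar_of_twelve_eq_zero hind (twelve_eq_zero_of_forall_isSumOfThreeIdempotents h),
    nonempty_ringEquiv_zmod_ringChar
      (natCast_surjective_of_forall_isSumOfThreeIdempotents hind h)⟩
end
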